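/- arXiv:2207.14518 — 10 statements merged into one kernel-verified Lean document; each statement's English description precedes it below -/
import Mathlib

section
/- Let M be a finitely generated free ℤ-module equipped with an even symmetric bilinear form B : M × M → ℤ. Suppose c ∈ M satisfies B(c,c) = 0 and the map v ↦ B(c,v) is surjective from M onto ℤ. Then there exists b ∈ M with B(b,b) = 0 and B(c,b) = 1 such that, setting U = ℤc + ℤb and K = {v ∈ M : B(v,c) = 0 and B(v,b) = 0}, the module M is the internal direct sum of U and K, and U and K are orthogonal with respect to B (so M splits off a hyperbolic plane containing c). -/
/-!
A vector `w` with `B c w = 1` and `B w w = 2 t` becomes isotropic after subtracting `t • c`, and its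
pairing with `c` does not change. So `c` lies in a hyperbolic pair `c, b`. The Gram matrix of such a
pair is invertible over any commutative ring, so every `v` has an orthogonal projection onto
`U = span {c, b}`, namely `B b v • c + B c v • b`, and `U` splits off.
-/

section HyperbolicPair

open Submodule LinearMap

variable {R M : Type*} [CommRing R] [AddCommGroup M] [Module R M] {B : LinearMap.BilinForm R M}
  {c b w : M}

/-- A hyperbolic pair: two isotropic vectors pairing to `1`, so that they span a hyperbolic plane.
The pairing is recorded in both orders, so that `B` itself need not be symmetric. -/
structure IsHyperbolicPair (B : LinearMap.BilinForm R M) (c b : M) : Prop where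
  left_self : B c c = 0
  right_self : B b b = 0
  left_right : B c b = 1
  right_left : B b c = 1

theorem isHyperbolicPair_sub_smul (hB : B.IsSymm) (hc : B c c = 0) (hcw : B c w = 1)
    {t : R} (hw : B w w = 2 * t) : IsHyperbolicPair B c (w - t • c) := by
  have hwc : B w c = 1 := (hB.eq w c).trans hcw
  refine ⟨hc, ?_, by simp [hc, hcw], by simp [hc, hwc]⟩
  calc B (w - t • c) (w - t • c)
      = B w w - t * B w c - t * (B c w - t * B c c) := by simp
    _ = 0 := by rw [hw, hwc, hcw, hc]; ring

theorem orthogonal_span_pair (B : LinearMap.BilinForm R M) (x y : M) :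
    B.orthogonal (span R {x, y}) = ker (B x) ⊓ ker (B y) := by
  ext v
  simp only [BilinForm.mem_orthogonal_iff, mem_inf, mem_ker]
  constructor
  · exact fun hv ↦ ⟨hv x (mem_span_of_mem (by simp)), hv y (mem_span_of_mem (by simp))⟩
  · rintro ⟨hx, hy⟩ u hu
    obtain ⟨r, s, rfl⟩ := mem_span_pair.mp hu
    simp [hx, hy]

namespace IsHyperbolicPair

theorem disjoint_orthogonal (h : IsHyperbolicPair B c b) :
    Disjoint (span R {c, b}) (B.orthogonal (span R {c, b})) := by
  rw [orthogonal_span_pair, disjoint_def]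
  rintro v hv ⟨hcv, hbv⟩
  obtain ⟨r, s, rfl⟩ := mem_span_pair.mp hv
  have hs : s = 0 := by simpa [h.left_self, h.left_right] using hcv
  have hr : r = 0 := by simpa [h.right_self, h.right_left] using hbv
  simp [hr, hs]

theorem codisjoint_orthogonal (h : IsHyperbolicPair B c b) :
    Codisjoint (span R {c, b}) (B.orthogonal (span R {c, b})) := by
  rw [orthogonal_span_pair, codisjoint_iff_exists_add_eq]
  intro v
  refine ⟨B b v • c + B c v • b, v - (B b v • c + B c v • b), mem_span_pair.mpr ⟨_, _, rfl⟩,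
    ⟨?_, ?_⟩, add_sub_cancel _ _⟩
  · simp [h.left_self, h.left_right]
  · simp [h.right_self, h.right_left]

theorem isCompl_orthogonal (h : IsHyperbolicPair B c b) :
    IsCompl (span R {c, b}) (B.orthogonal (span R {c, b})) :=
  ⟨h.disjoint_orthogonal, h.codisjoint_orthogonal⟩

end IsHyperbolicPair

theorem fake_monster.stmt0_general (hB : B.IsSymm) (hc : B c c = 0) (hcw : B c w = 1)
    (hw : 2 ∣ B w w) :
    ∃ b : M, B b b = 0 ∧ B c b = 1 ∧
      span R {c, b} ⊓ (ker (B.flip c) ⊓ ker (B.flip b)) = ⊥ ∧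
      span R {c, b} ⊔ (ker (B.flip c) ⊓ ker (B.flip b)) = ⊤ ∧
      ∀ u ∈ span R {c, b}, ∀ k ∈ ker (B.flip c) ⊓ ker (B.flip b), B u k = 0 := by
  obtain ⟨t, ht⟩ := hw
  have h : IsHyperbolicPair B c (w - t • c) := isHyperbolicPair_sub_smul hB hc hcw ht
  have hflip : B.flip = B := LinearMap.ext₂ fun x y ↦ hB.eq y x
  refine ⟨w - t • c, h.right_self, h.left_right, ?_⟩
  rw [hflip, ← orthogonal_span_pair]
  exact ⟨h.isCompl_orthogonal.inf_eq_bot, h.isCompl_orthogonal.sup_eq_top,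
    fun u hu k hk ↦ hk u hu⟩

end HyperbolicPair

/-- Let `M` be a finitely generated free `ℤ`-module equipped with an even
symmetric bilinear form `B`. If `c ∈ M` is isotropic (`B c c = 0`) and the map `v ↦ B c v`
is surjective onto `ℤ`, then there is `b ∈ M` with `B b b = 0` and `B c b = 1` such that `M`
is the internal direct sum of `U = ℤc + ℤb` and `K = {v | B v c = 0 ∧ B v b = 0}`,
with `U` and `K` orthogonal. -/
theorem fake_monster.stmt0 {M : Type*} [AddCommGroup M] [Module ℤ M]
    [Module.Free ℤ M] [Module.Finite ℤ M]
    (B : M →ₗ[ℤ] M →ₗ[ℤ] ℤ)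
    (hsymm : ∀ v w : M, B v w = B w v)
    (heven : ∀ v : M, 2 ∣ B v v)
    (c : M) (hc : B c c = 0)
    (hsurj : Function.Surjective fun v : M => B c v) :
    ∃ b : M, B b b = 0 ∧ B c b = 1 ∧
      (Submodule.span ℤ ({c, b} : Set M)) ⊓
          (LinearMap.ker (B.flip c) ⊓ LinearMap.ker (B.flip b)) = ⊥ ∧
      (Submodule.span ℤ ({c, b} : Set M)) ⊔
          (LinearMap.ker (B.flip c) ⊓ LinearMap.ker (B.flip b)) = ⊤ ∧
      ∀ u ∈ Submodule.span ℤ ({c, b} : Set M),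
        ∀ k ∈ LinearMap.ker (B.flip c) ⊓ LinearMap.ker (B.flip b), B u k = 0 := by
  obtain ⟨w, hcw⟩ := hsurj 1
  exact fake_monster.stmt0_general ⟨hsymm⟩ hc hcw (heven w)
end

section
/- Let V be a finite-dimensional ℚ-vector space with a nondegenerate symmetric bilinear form B, and let M be a maximal even lattice in V. Then for every primitive vector c ∈ M with B(c,c) = 0 there exists v ∈ M with B(c,v) = 1; that is, the image B(c,M) of M under pairing with c is all of ℤ. -/
/-- An even lattice in a `ℚ`-vector space `V` (with respect to a bilinear form `B`):
a finitely generated `ℤ`-submodule that spans `V` over `ℚ`, on which `B` takes integer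
values and takes even values on the diagonal. -/
def IsEvenLattice {V : Type*} [AddCommGroup V] [Module ℚ V]
    (B : V →ₗ[ℚ] V →ₗ[ℚ] ℚ) (M : Submodule ℤ V) : Prop :=
  M.FG ∧ Submodule.span ℚ (M : Set V) = ⊤ ∧
    (∀ v ∈ M, ∀ w ∈ M, ∃ n : ℤ, B v w = (n : ℚ)) ∧
    (∀ v ∈ M, ∃ n : ℤ, B v v = 2 * (n : ℚ))

/-! If `B(c, M)` is a proper ideal of `ℤ`, possibly zero, it lies in `pℤ` for some prime `p`. Then
`e = c / p` pairs integrally with `M` and is isotropic, so `M + ℤe` is again an even lattice. By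
maximality `e ∈ M`, and `c = p e` contradicts primitivity. -/

theorem exists_prime_forall_dvd_of_ne_top {I : Ideal ℤ} (hI : I ≠ ⊤) :
    ∃ p : ℕ, p.Prime ∧ ∀ k ∈ I, (p : ℤ) ∣ k := by
  have hgen : (Submodule.IsPrincipal.generator I).natAbs ≠ 1 := by
    rwa [Ne, ← Int.isUnit_iff_natAbs_eq, ← Ideal.span_singleton_eq_top,
      Ideal.span_singleton_generator]
  obtain ⟨p, hp, hdvd⟩ := Nat.exists_prime_and_dvd hgen
  exact ⟨p, hp, fun k hk ↦
    (Int.natCast_dvd.2 hdvd).trans ((Submodule.IsPrincipal.mem_iff_generator_dvd I).1 hk)⟩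

section

variable {V : Type*} [AddCommGroup V] [Module ℚ V] {B : V →ₗ[ℚ] V →ₗ[ℚ] ℚ} {M : Submodule ℤ V}

/-- The ideal `B(c, M) ∩ ℤ` of the integers which are values of the pairing of `c` with `M`. It is
all of `B(c, M)` when `M` is an even lattice containing `c`. -/
def pairingIdeal (B : V →ₗ[ℚ] V →ₗ[ℚ] ℚ) (M : Submodule ℤ V) (c : V) : Ideal ℤ :=
  (M.map ((B c).restrictScalars ℤ)).comap (Algebra.linearMap ℤ ℚ)

theorem mem_pairingIdeal {c : V} {k : ℤ} : k ∈ pairingIdeal B M c ↔ ∃ v ∈ M, B c v = k :=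
  Iff.rfl

namespace IsEvenLattice

theorem exists_eq_mul_of_forall_mem_pairingIdeal_dvd (hM : IsEvenLattice B M) {c : V} (hc : c ∈ M)
    {d : ℤ} (hd : ∀ k ∈ pairingIdeal B M c, d ∣ k) {v : V} (hv : v ∈ M) :
    ∃ k : ℤ, B c v = d * k := by
  obtain ⟨m, hm⟩ := hM.2.2.1 c hc v hv
  obtain ⟨k, rfl⟩ := hd m (mem_pairingIdeal.2 ⟨v, hv, hm⟩)
  exact ⟨k, by rw [hm, Int.cast_mul]⟩

theorem sup_span_singleton (hB : B.IsSymm) (hM : IsEvenLattice B M) {e : V}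
    (heM : ∀ v ∈ M, ∃ k : ℤ, B e v = k) (hee : ∃ n : ℤ, B e e = 2 * n) :
    IsEvenLattice B (M ⊔ Submodule.span ℤ {e}) := by
  obtain ⟨hfg, hspan, hint, heven⟩ := hM
  obtain ⟨n, hn⟩ := hee
  have hsymm (v : V) : B v e = B e v := hB.eq v e
  have exists_add_zsmul {x : V} (hx : x ∈ M ⊔ Submodule.span ℤ {e}) :
      ∃ v ∈ M, ∃ a : ℤ, v + a • e = x := by
    simpa only [Submodule.mem_sup, Submodule.mem_span_singleton, exists_exists_eq_and] using hx
  refine ⟨hfg.sup (Submodule.fg_span_singleton e), ?_, fun x hx y hy ↦ ?_, fun x hx ↦ ?_⟩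
  · exact top_unique (hspan ▸ Submodule.span_mono (SetLike.coe_subset_coe.2 le_sup_left))
  · obtain ⟨v, hv, a, rfl⟩ := exists_add_zsmul hx
    obtain ⟨w, hw, b, rfl⟩ := exists_add_zsmul hy
    obtain ⟨k, hk⟩ := hint v hv w hw
    obtain ⟨l, hl⟩ := heM v hv
    obtain ⟨m, hm⟩ := heM w hw
    refine ⟨k + b * l + a * m + 2 * a * b * n, ?_⟩
    simp only [map_add, map_zsmul, LinearMap.add_apply, LinearMap.smul_apply, zsmul_eq_mul,
      hsymm, hk, hl, hm, hn]
    push_cast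
    ring
  · obtain ⟨v, hv, a, rfl⟩ := exists_add_zsmul hx
    obtain ⟨k, hk⟩ := heven v hv
    obtain ⟨l, hl⟩ := heM v hv
    refine ⟨k + a * l + a ^ 2 * n, ?_⟩
    simp only [map_add, map_zsmul, LinearMap.add_apply, LinearMap.smul_apply, zsmul_eq_mul,
      hsymm, hk, hl, hn]
    push_cast
    ring

theorem mem_of_maximal (hB : B.IsSymm) (hM : Maximal (IsEvenLattice B) M) {e : V}
    (heM : ∀ v ∈ M, ∃ k : ℤ, B e v = k) (hee : ∃ n : ℤ, B e e = 2 * n) : e ∈ M :=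
  hM.le_of_ge (hM.prop.sup_span_singleton hB heM hee) le_sup_left
    (Submodule.mem_sup_right (Submodule.mem_span_singleton_self e))

theorem exists_zsmul_eq_of_maximal (hB : B.IsSymm) (hM : Maximal (IsEvenLattice B) M) {c : V}
    {d : ℤ} (hd : d ≠ 0) (hcM : ∀ v ∈ M, ∃ k : ℤ, B c v = d * k)
    (hcc : ∃ n : ℤ, B c c = 2 * d ^ 2 * n) : ∃ e ∈ M, d • e = c := by
  have hdQ : (d : ℚ) ≠ 0 := Int.cast_ne_zero.2 hd
  refine ⟨(d : ℚ)⁻¹ • c, mem_of_maximal hB hM (fun v hv ↦ ?_) ?_, ?_⟩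
  · obtain ⟨k, hk⟩ := hcM v hv
    exact ⟨k, by rw [map_smul, LinearMap.smul_apply, hk, smul_eq_mul, inv_mul_cancel_left₀ hdQ]⟩
  · obtain ⟨n, hn⟩ := hcc
    refine ⟨n, ?_⟩
    simp only [map_smul, LinearMap.smul_apply, smul_eq_mul, hn]
    field_simp
  · rw [← Int.cast_smul_eq_zsmul ℚ, smul_inv_smul₀ hdQ]

end IsEvenLattice

end

/-- Let `M` be a maximal even lattice in a finite-dimensional `ℚ`-vector
space with nondegenerate symmetric bilinear form `B`. Then for every primitive vector
`c ∈ M` with `B c c = 0` there exists `v ∈ M` with `B c v = 1`. -/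
theorem fake_monster.stmt1 {V : Type*} [AddCommGroup V] [Module ℚ V]
    [FiniteDimensional ℚ V]
    (B : V →ₗ[ℚ] V →ₗ[ℚ] ℚ)
    (hsymm : ∀ v w : V, B v w = B w v)
    (hnondeg : ∀ v : V, (∀ w : V, B v w = 0) → v = 0)
    (M : Submodule ℤ V)
    (hM : IsEvenLattice B M)
    (hmax : ∀ M' : Submodule ℤ V, IsEvenLattice B M' → M ≤ M' → M' = M)
    (c : V) (hc : c ∈ M)
    (hprim : ∀ d : ℤ, 1 < d → ∀ v ∈ M, c ≠ d • v)
    (hiso : B c c = 0) :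
    ∃ v ∈ M, B c v = 1 := by
  by_contra hne
  have hproper : pairingIdeal B M c ≠ ⊤ := by
    rwa [Ideal.ne_top_iff_one, mem_pairingIdeal, Int.cast_one]
  obtain ⟨p, hp, hdvd⟩ := exists_prime_forall_dvd_of_ne_top hproper
  have hMmax : Maximal (IsEvenLattice B) M := ⟨hM, fun M' hM' hle ↦ (hmax M' hM' hle).le⟩
  obtain ⟨e, he, hpe⟩ : ∃ e ∈ M, (p : ℤ) • e = c :=
    IsEvenLattice.exists_zsmul_eq_of_maximal ⟨hsymm⟩ hMmax (mod_cast hp.ne_zero)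
      (fun _ hv ↦ hM.exists_eq_mul_of_forall_mem_pairingIdeal_dvd hc hdvd hv)
      ⟨0, by simp [hiso]⟩
  exact hprim p (mod_cast hp.one_lt) e he hpe.symm
end

section
/- Let p be a prime number and a a positive integer. Then p^(a-1) + 24 = p^(a+1) if and only if (p,a) = (2,4), (p,a) = (3,2), or (p,a) = (5,1). -/
/-!
The equation factors as `n ^ (a - 1) * (n ^ 2 - 1) = 24`, so `n ^ 2 - 1` divides `24`. This leaves
`n = 2, 3, 5`, for which the complementary divisor `n ^ (a - 1)` is `8 = 2 ^ 3`, `3 = 3 ^ 1`,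
`1 = 5 ^ 0`.
-/

theorem pow_mul_pow_sub_one_eq_of_pow_add_eq {n b c k : ℕ} (h : n ^ b + k = n ^ (b + c)) :
    n ^ b * (n ^ c - 1) = k := by
  rw [Nat.mul_sub_one, ← pow_add, ← h, Nat.add_sub_cancel_left]

theorem sq_sub_one_dvd_twentyFour_iff {n : ℕ} : n ^ 2 - 1 ∣ 24 ↔ n = 2 ∨ n = 3 ∨ n = 5 := by
  constructor
  · intro hdvd
    have hsq : n ^ 2 - 1 ≤ 24 := Nat.le_of_dvd (by norm_num) hdvd
    have hn : n ≤ 5 := (Nat.pow_le_pow_iff_left two_ne_zero).mp (by lia : n ^ 2 ≤ 5 ^ 2)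
    interval_cases n <;> revert hdvd <;> decide
  · rintro (rfl | rfl | rfl) <;> decide

theorem fake_monster.stmt4_general (n a : ℕ) (ha : 1 ≤ a) :
    n ^ (a - 1) + 24 = n ^ (a + 1) ↔
      (n = 2 ∧ a = 4) ∨ (n = 3 ∧ a = 2) ∨ (n = 5 ∧ a = 1) := by
  constructor
  · obtain ⟨b, rfl⟩ := Nat.exists_eq_add_of_le' ha
    intro h
    have hmul : n ^ b * (n ^ 2 - 1) = 24 := pow_mul_pow_sub_one_eq_of_pow_add_eq h
    obtain rfl | rfl | rfl := sq_sub_one_dvd_twentyFour_iff.mp (Dvd.intro_left _ hmul)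
    · have hb : b = 3 := Nat.pow_right_injective le_rfl (by lia : 2 ^ b = 2 ^ 3)
      simp [hb]
    · have hb : b = 1 := Nat.pow_right_injective (by norm_num : 2 ≤ 3) (by lia : 3 ^ b = 3 ^ 1)
      simp [hb]
    · have hb : b = 0 := Nat.pow_right_injective (by norm_num : 2 ≤ 5) (by lia : 5 ^ b = 5 ^ 0)
      simp [hb]
  · rintro (⟨rfl, rfl⟩ | ⟨rfl, rfl⟩ | ⟨rfl, rfl⟩) <;> norm_num

/-- For a prime `p` and a positive integer `a`,
`p^(a-1) + 24 = p^(a+1)` holds iff `(p,a)` is `(2,4)`, `(3,2)` or `(5,1)`. -/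
theorem fake_monster.stmt4 (p a : ℕ) (hp : p.Prime) (ha : 1 ≤ a) :
    p ^ (a - 1) + 24 = p ^ (a + 1) ↔
      (p = 2 ∧ a = 4) ∨ (p = 3 ∧ a = 2) ∨ (p = 5 ∧ a = 1) :=
  fake_monster.stmt4_general p a ha
end

section
/- Let N be a positive integer and let x be a complex number with |x| < 1. Then the sum of xⁿ/n over all positive integers n coprime to N equals -∑_{b | N} (μ(b)/b)·log(1 - x^b), where the sum on the right ranges over the positive divisors b of N and log is the principal branch of the complex logarithm. -/
/-!
By Möbius inversion the indicator of `gcd(n, N) = 1` is `∑_{b ∣ N, b ∣ n} μ(b)`. Exchanging this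
finite sum with the series reduces the sum over `n` coprime to `N` to the sums over the multiples of
each `b ∣ N`, and the multiples of `b` contribute `∑ₖ x^(bk)/(bk) = -log(1 - x^b)/b`.
-/

open scoped ArithmeticFunction.Moebius

theorem sum_moebius_divisors_filter_dvd {N : ℕ} (hN : N ≠ 0) (n : ℕ) :
    ∑ b ∈ N.divisors with b ∣ n, μ b = if n.Coprime N then 1 else 0 := by
  have common_divisors : {b ∈ N.divisors | b ∣ n} = (n.gcd N).divisors := by
    rw [← Nat.divisors_filter_dvd_of_dvd hN (Nat.gcd_dvd_right n N)]
    refine Finset.filter_congr fun b hb ↦ ?_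
    rw [Nat.dvd_gcd_iff, and_iff_left (Nat.dvd_of_mem_divisors hb)]
  rw [common_divisors, ← ArithmeticFunction.coe_mul_zeta_apply,
    ArithmeticFunction.moebius_mul_coe_zeta, ArithmeticFunction.one_apply]

theorem hasSum_ite_dvd_iff {E : Type*} [AddCommMonoid E] [TopologicalSpace E] {f : ℕ → E} {a : E}
    {b : ℕ} (hb : b ≠ 0) :
    HasSum (fun n ↦ if b ∣ n then f n else 0) a ↔ HasSum (fun k ↦ f (b * k)) a := by
  have vanishes_off_multiples (n : ℕ) (hn : n ∉ Set.range (b * ·)) :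
      (if b ∣ n then f n else 0) = 0 :=
    if_neg fun ⟨k, hk⟩ ↦ hn ⟨k, hk.symm⟩
  simpa only [Function.comp_def, dvd_mul_right, if_true] using
    ((mul_right_injective₀ hb).hasSum_iff vanishes_off_multiples).symm

theorem hasSum_ite_coprime {E : Type*} [AddCommGroup E] [TopologicalSpace E]
    [IsTopologicalAddGroup E] {f F : ℕ → E} {N : ℕ} (hN : N ≠ 0)
    (hF : ∀ b ∈ N.divisors, HasSum (fun k ↦ f (b * k)) (F b)) :
    HasSum (fun n ↦ if n.Coprime N then f n else 0) (∑ b ∈ N.divisors, μ b • F b) := by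
  have sieve (n : ℕ) : (if n.Coprime N then f n else 0) =
      ∑ b ∈ N.divisors, μ b • if b ∣ n then f n else 0 := by
    simp_rw [smul_ite, smul_zero, ← Finset.sum_filter, ← Finset.sum_smul,
      sum_moebius_divisors_filter_dvd hN, ite_smul, one_smul, zero_smul]
  simp_rw [sieve]
  refine hasSum_sum fun b hb ↦ HasSum.const_smul _ ?_
  exact (hasSum_ite_dvd_iff (Nat.pos_of_mem_divisors hb).ne').mpr (hF b hb)

theorem hasSum_pow_mul_div_mul {x : ℂ} (hx : ‖x‖ < 1) {b : ℕ} (hb : b ≠ 0) :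
    HasSum (fun k : ℕ ↦ x ^ (b * k) / ((b * k : ℕ) : ℂ)) (-Complex.log (1 - x ^ b) / b) := by
  have norm_pow_lt_one : ‖x ^ b‖ < 1 := by
    rw [norm_pow]
    exact pow_lt_one₀ (norm_nonneg x) hx hb
  simpa only [pow_mul, Nat.cast_mul, mul_comm (b : ℂ), div_div] using
    (Complex.hasSum_taylorSeries_neg_log norm_pow_lt_one).div_const (b : ℂ)

theorem hasSum_ite_coprime_pow_div {N : ℕ} (hN : N ≠ 0) {x : ℂ} (hx : ‖x‖ < 1) :
    HasSum (fun n : ℕ ↦ if n.Coprime N then x ^ n / (n : ℂ) else 0)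
      (-∑ b ∈ N.divisors, ((μ b : ℂ) / (b : ℂ)) * Complex.log (1 - x ^ b)) := by
  have sieved := hasSum_ite_coprime (f := fun n ↦ x ^ n / (n : ℂ)) hN fun b hb ↦
    hasSum_pow_mul_div_mul hx (Nat.pos_of_mem_divisors hb).ne'
  have weights (b : ℕ) : μ b • (-Complex.log (1 - x ^ b) / (b : ℂ)) =
      -(((μ b : ℂ) / (b : ℂ)) * Complex.log (1 - x ^ b)) := by
    rw [zsmul_eq_mul]
    ring
  simpa only [weights, Finset.sum_neg_distrib] using sieved

open ArithmeticFunction in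
/-- For a positive integer `N` and a complex number `x` with `|x| < 1`,
the sum of `xⁿ/n` over positive integers `n` coprime to `N` equals
`-∑_{b ∣ N} (μ(b)/b)·log(1 - x^b)`, where `log` is the principal branch of the complex
logarithm and the sum ranges over the positive divisors `b` of `N`. -/
theorem fake_monster.stmt8 (N : ℕ) (hN : 0 < N) (x : ℂ) (hx : ‖x‖ < 1) :
    ∑' n : ℕ, (if 0 < n ∧ Nat.Coprime n N then x ^ n / (n : ℂ) else 0) =
      -∑ b ∈ N.divisors, ((moebius b : ℂ) / (b : ℂ)) * Complex.log (1 - x ^ b) := by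
  rw [← (hasSum_ite_coprime_pow_div hN.ne' hx).tsum_eq]
  refine tsum_congr fun n ↦ ?_
  obtain rfl | hn := n.eq_zero_or_pos
  · -- The term at `n = 0` is `x ^ 0 / 0 = 0`, so it may be included when `N = 1`.
    simp
  · simp only [hn, true_and]
end

section
/- Let n be a positive integer and a an integer. Then the Ramanujan sum R(a,n) = ∑_{c ∈ (ℤ/nℤ)ˣ} exp(2πi·a·c/n), where the sum ranges over the units c of ℤ/nℤ, satisfies R(a,n) = ∑_{t | gcd(a,n)} t·μ(n/t), where the sum ranges over the positive common divisors t of a and n. -/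
/-!
The units of `ZMod n` parametrize the primitive `n`-th roots of unity, so the Ramanujan sum is the
`a`-th power sum of the latter. Each `n`-th root of unity is primitive of exactly one order `d ∣ n`,
and the `a`-th power sum of all `n`-th roots of unity is `n` if `n ∣ a` and `0` otherwise;
Möbius inversion isolates the primitive ones.
-/

open Finset Polynomial

theorem sum_primitiveRoots_eq_sum_units {R M : Type*} [CommRing R] [IsDomain R] [AddCommMonoid M]
    {n : ℕ} [NeZero n] {ζ : R} (hζ : IsPrimitiveRoot ζ n) (f : R → M) :
    ∑ η ∈ primitiveRoots n R, f η = ∑ c : (ZMod n)ˣ, f (ζ ^ (c : ZMod n).val) := by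
  symm
  refine sum_bij (fun c _ ↦ ζ ^ (c : ZMod n).val) ?mem ?inj ?surj fun _ _ ↦ rfl
  case mem =>
    intro c _
    exact (mem_primitiveRoots (NeZero.pos n)).2
      (hζ.pow_of_coprime _ (ZMod.val_coe_unit_coprime c))
  case inj =>
    intro c _ d _ h
    exact Units.ext (ZMod.val_injective n (hζ.pow_inj (ZMod.val_lt _) (ZMod.val_lt _) h))
  case surj =>
    intro η hη
    obtain ⟨i, hi, hin, rfl⟩ :=
      hζ.isPrimitiveRoot_iff.1 (isPrimitiveRoot_of_mem_primitiveRoots hη)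
    refine ⟨ZMod.unitOfCoprime i hin, mem_univ _, ?_⟩
    rw [ZMod.coe_unitOfCoprime, ZMod.val_cast_of_lt hi]

theorem sum_divisors_sum_primitiveRoots {R M : Type*} [CommRing R] [IsDomain R] [AddCommMonoid M]
    (n : ℕ) (f : R → M) :
    ∑ d ∈ n.divisors, ∑ η ∈ primitiveRoots d R, f η = ∑ η ∈ nthRootsFinset n (1 : R), f η := by
  classical
  rw [IsPrimitiveRoot.nthRoots_one_eq_biUnion_primitiveRoots,
    sum_biUnion fun _ _ _ _ h ↦ IsPrimitiveRoot.disjoint h]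

theorem divisors_gcd_natAbs (a : ℤ) {n : ℕ} (hn : n ≠ 0) :
    (a.natAbs.gcd n).divisors = n.divisors.filter fun t : ℕ ↦ (t : ℤ) ∣ a := by
  ext t
  simp [Int.natCast_dvd, Nat.dvd_gcd_iff, hn, and_comm]

section Field

variable {K : Type*} [Field K] {n : ℕ} {ζ : K}

theorem sum_nthRootsFinset_zpow_of_dvd (hζ : IsPrimitiveRoot ζ n) {a : ℤ} (h : (n : ℤ) ∣ a) :
    ∑ η ∈ nthRootsFinset n (1 : K), η ^ a = n := by
  obtain rfl | hn := n.eq_zero_or_pos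
  · simp
  have zpow_eq_one : ∀ η ∈ nthRootsFinset n (1 : K), η ^ a = 1 := by
    intro η hη
    obtain ⟨b, rfl⟩ := h
    rw [zpow_mul, zpow_natCast, (mem_nthRootsFinset hn 1).1 hη, one_zpow]
  rw [sum_congr rfl zpow_eq_one, sum_const, hζ.card_nthRootsFinset, nsmul_one]

theorem sum_nthRootsFinset_zpow_of_not_dvd (hζ : IsPrimitiveRoot ζ n) {a : ℤ}
    (h : ¬(n : ℤ) ∣ a) : ∑ η ∈ nthRootsFinset n (1 : K), η ^ a = 0 := by
  obtain rfl | hn := n.eq_zero_or_pos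
  · simp
  -- Multiplication by `ζ` permutes the `n`-th roots of unity and scales the sum by `ζ ^ a ≠ 1`.
  have scaled : ζ ^ a * ∑ η ∈ nthRootsFinset n (1 : K), η ^ a =
      ∑ η ∈ nthRootsFinset n (1 : K), η ^ a := by
    rw [mul_sum]
    refine sum_equiv (Equiv.mulLeft₀ ζ (hζ.ne_zero hn.ne')) (fun η ↦ ?_) fun η _ ↦ ?_
    · simp [mem_nthRootsFinset hn, mul_pow, hζ.pow_eq_one]
    · simp [mul_zpow]
  exact (mul_left_eq_self₀.1 scaled).resolve_left fun h1 ↦ h ((hζ.zpow_eq_one_iff_dvd a).1 h1)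

theorem sum_nthRootsFinset_zpow (hζ : IsPrimitiveRoot ζ n) (a : ℤ) :
    ∑ η ∈ nthRootsFinset n (1 : K), η ^ a = if (n : ℤ) ∣ a then (n : K) else 0 := by
  split_ifs with h
  · exact sum_nthRootsFinset_zpow_of_dvd hζ h
  · exact sum_nthRootsFinset_zpow_of_not_dvd hζ h

open ArithmeticFunction in
theorem sum_primitiveRoots_zpow [NeZero n] (hζ : IsPrimitiveRoot ζ n) (a : ℤ) :
    ∑ η ∈ primitiveRoots n K, η ^ a =
      ((∑ t ∈ (a.natAbs.gcd n).divisors, (t : ℤ) * moebius (n / t) : ℤ) : K) := by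
  have sum_over_divisors : ∀ m > 0, m ∈ {m | m ∣ n} →
      ∑ d ∈ m.divisors, ∑ η ∈ primitiveRoots d K, η ^ a =
        if (m : ℤ) ∣ a then (m : K) else 0 := by
    rintro m - ⟨k, rfl⟩
    rw [sum_divisors_sum_primitiveRoots,
      sum_nthRootsFinset_zpow (hζ.pow (NeZero.pos _) (mul_comm m k))]
  have inversion := (sum_eq_iff_sum_mul_moebius_eq_on {m | m ∣ n} fun _ _ ↦ dvd_trans).1
    sum_over_divisors n (NeZero.pos n) dvd_rfl
  rw [← inversion, Nat.sum_divisorsAntidiagonal'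
    (f := fun x y ↦ (moebius x : K) * if (y : ℤ) ∣ a then (y : K) else 0),
    divisors_gcd_natAbs a (NeZero.ne n), sum_filter]
  push_cast
  simp only [mul_comm, ite_mul, zero_mul]

open ArithmeticFunction in
theorem fake_monster.stmt9_general [NeZero n] (hζ : IsPrimitiveRoot ζ n) (a : ℤ) :
    ∑ c : (ZMod n)ˣ, ζ ^ (a * (c : ZMod n).val) =
      ((∑ t ∈ (a.natAbs.gcd n).divisors, (t : ℤ) * moebius (n / t) : ℤ) : K) := by
  simp only [← sum_primitiveRoots_zpow hζ a, sum_primitiveRoots_eq_sum_units hζ,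
    ← zpow_natCast, ← zpow_mul, mul_comm]

end Field

theorem exp_two_pi_I_div_zpow (n : ℕ) (a k : ℤ) :
    Complex.exp (2 * Real.pi * Complex.I / n) ^ (a * k) =
      Complex.exp (2 * Real.pi * Complex.I * a * k / n) := by
  rw [← Complex.exp_int_mul]
  congr 1
  push_cast
  ring

open ArithmeticFunction in
/-- For a positive integer `n` and an integer `a`, the Ramanujan sum
`R(a,n) = ∑_{c ∈ (ℤ/nℤ)ˣ} exp(2πi·a·c/n)` equals `∑_{t ∣ gcd(a,n)} t·μ(n/t)`, where the
sum on the right ranges over the positive common divisors `t` of `a` and `n`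
(that is, the divisors of `gcd(|a|, n)`). -/
theorem fake_monster.stmt9 (n : ℕ) [NeZero n] (a : ℤ) :
    ∑ c : (ZMod n)ˣ,
        Complex.exp (2 * Real.pi * Complex.I * (a : ℂ) * (((c : ZMod n).val : ℕ) : ℂ) / (n : ℂ)) =
      ((∑ t ∈ (Nat.gcd a.natAbs n).divisors, (t : ℤ) * moebius (n / t) : ℤ) : ℂ) := by
  simpa only [exp_two_pi_I_div_zpow, Int.cast_natCast] using
    fake_monster.stmt9_general (Complex.isPrimitiveRoot_exp n (NeZero.ne n)) a
end

section
/- Let ι be a finite type, A : Matrix ι ι ℚ, and let b : ℕ → ℤ be a finitely supported function with b(0) = 0 such that, in the field ℚ(X) of rational functions over ℚ, the image of the reversed characteristic polynomial det(1 - X·A) equals the finite product ∏_{k ≥ 1} (1 - X^k)^{b(k)} (integer exponents). Then for every positive integer m, the trace of A^m equals ∑_{k | m} k·b(k), the sum ranging over the positive divisors k of m. -/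
/-!
Let `θ = X · d/dX` be the Euler derivation of `R⟦X⟧` and compare the logarithmic derivatives
`θ f / f` of the two sides of the cycle-shape identity. By Jacobi's formula, that of
`det (1 - X A)` is `tr ((1 - X A)⁻¹ (-X A)) = -∑_{m ≥ 1} tr (A ^ m) X ^ m`, while that of
`1 - X ^ k` is `-k X ^ k / (1 - X ^ k) = -∑_{m ≥ 1, k ∣ m} k X ^ m`. Logarithmic derivatives turn
products into sums, and the claim is the equality of the coefficients of `X ^ m`.
-/

section IsLogDeriv

variable {R A κ : Type*} [CommSemiring R]

section CommSemiring

variable [CommSemiring A] [Algebra R A] {D : Derivation R A A} {f g L M : A}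

/-- `L` is a logarithmic derivative of `f` with respect to the derivation `D`, i.e. `L = D f / f`;
the division is cleared so that `f` may be any element of the ring. -/
def IsLogDeriv (D : Derivation R A A) (f L : A) : Prop :=
  D f = f * L

namespace IsLogDeriv

theorem one (D : Derivation R A A) : IsLogDeriv D 1 0 := by
  simp [IsLogDeriv]

theorem mul (hf : IsLogDeriv D f L) (hg : IsLogDeriv D g M) : IsLogDeriv D (f * g) (L + M) := by
  rw [IsLogDeriv, D.leibniz, hf, hg, smul_eq_mul, smul_eq_mul]
  ring

theorem pow (hf : IsLogDeriv D f L) (n : ℕ) : IsLogDeriv D (f ^ n) (n • L) := by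
  induction n with
  | zero => simpa using one D
  | succ n ih => simpa only [pow_succ, succ_nsmul] using ih.mul hf

theorem prod {s : Finset κ} {f L : κ → A} (h : ∀ i ∈ s, IsLogDeriv D (f i) (L i)) :
    IsLogDeriv D (∏ i ∈ s, f i) (∑ i ∈ s, L i) := by
  classical
  induction s using Finset.induction_on with
  | empty => simpa using one D
  | insert a s ha ih =>
    rw [Finset.prod_insert ha, Finset.sum_insert ha]
    exact (h a (s.mem_insert_self a)).mul (ih fun i hi => h i (Finset.mem_insert_of_mem hi))

theorem unique (hf : IsUnit f) (hL : IsLogDeriv D f L) (hM : IsLogDeriv D f M) : L = M :=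
  hf.mul_left_cancel (hL.symm.trans hM)

end IsLogDeriv

end CommSemiring

theorem IsLogDeriv.eq_sum_zsmul [CommRing A] [Algebra R A] {D : Derivation R A A} {g M : A}
    {s : Finset κ} {f L : κ → A} {n : κ → ℤ} (hg : IsLogDeriv D g M)
    (hf : ∀ i ∈ s, IsLogDeriv D (f i) (L i)) (hunit : ∀ i ∈ s, IsUnit (f i))
    (h : g * ∏ i ∈ s, f i ^ (-n i).toNat = ∏ i ∈ s, f i ^ (n i).toNat) :
    M = ∑ i ∈ s, n i • L i := by
  have hprod (e : κ → ℕ) : IsLogDeriv D (∏ i ∈ s, f i ^ e i) (∑ i ∈ s, e i • L i) :=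
    .prod fun i hi => (hf i hi).pow (e i)
  have hsum : M + ∑ i ∈ s, (-n i).toNat • L i = ∑ i ∈ s, (n i).toNat • L i :=
    IsLogDeriv.unique (IsUnit.prod_iff.2 fun i hi => (hunit i hi).pow _)
      (h ▸ hg.mul (hprod _)) (hprod _)
  rw [eq_sub_of_add_eq hsum, ← Finset.sum_sub_distrib]
  refine Finset.sum_congr rfl fun i _ => ?_
  rw [← natCast_zsmul, ← natCast_zsmul, sub_eq_add_neg, ← sub_zsmul, Int.toNat_sub_toNat_neg]

end IsLogDeriv

section Jacobi

variable {R A κ ι : Type*} [CommSemiring R]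

theorem derivation_prod [CommSemiring A] [Algebra R A] [DecidableEq κ] (D : Derivation R A A)
    (s : Finset κ) (f : κ → A) :
    D (∏ i ∈ s, f i) = ∑ i ∈ s, (∏ j ∈ s.erase i, f j) * D (f i) := by
  induction s using Finset.induction_on with
  | empty => simp
  | insert a s ha ih =>
    have herase : ∀ i ∈ s, (∏ j ∈ (insert a s).erase i, f j) * D (f i) =
        f a * ((∏ j ∈ s.erase i, f j) * D (f i)) := fun i hi => by
      rw [Finset.erase_insert_of_ne (ne_of_mem_of_not_mem hi ha).symm,
        Finset.prod_insert fun h => ha (Finset.mem_of_mem_erase h), mul_assoc]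
    rw [Finset.prod_insert ha, D.leibniz, ih, Finset.sum_insert ha, Finset.erase_insert ha,
      Finset.sum_congr rfl herase, ← Finset.mul_sum, smul_eq_mul, smul_eq_mul, add_comm]

variable [CommRing A] [Algebra R A] [Fintype ι] [DecidableEq ι]

theorem derivation_det (D : Derivation R A A) (M : Matrix ι ι A) :
    D M.det = (M.adjugate * M.map D).trace := by
  have hdiag (i : ι) : (M.adjugate * M.map D) i i = (M.updateCol i fun j => D (M j i)).det := by
    rw [← Matrix.cramer_apply, Matrix.cramer_eq_adjugate_mulVec]
    rfl
  have hperm (σ : Equiv.Perm ι) (i : ι) :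
      ∏ j, M.updateCol i (fun j => D (M j i)) (σ j) j =
        (∏ j ∈ Finset.univ.erase i, M (σ j) j) * D (M (σ i) i) := by
    rw [← Finset.prod_erase_mul _ _ (Finset.mem_univ i), Matrix.updateCol_self]
    congr 1
    exact Finset.prod_congr rfl fun j hj => by rw [Matrix.updateCol_ne (Finset.ne_of_mem_erase hj)]
  simp only [Matrix.trace, Matrix.diag, hdiag, Matrix.det_apply, map_sum, hperm]
  rw [Finset.sum_comm]
  refine Finset.sum_congr rfl fun σ _ => ?_
  rw [← Finset.smul_sum, ← derivation_prod, Units.smul_def, Units.smul_def, map_zsmul]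

theorem isLogDeriv_det (D : Derivation R A A) {M N : Matrix ι ι A} (hNM : N * M = 1) :
    IsLogDeriv D M.det (N * M.map D).trace := by
  have hadj : M.adjugate = M.det • N := by
    rw [← one_mul M.adjugate, ← hNM, mul_assoc, M.mul_adjugate, Matrix.mul_smul, mul_one]
  rw [IsLogDeriv, derivation_det, hadj, Matrix.smul_mul, Matrix.trace_smul, smul_eq_mul]

end Jacobi

section PowerSeries

open PowerSeries
open scoped Polynomial

variable {R ι : Type*} [CommRing R]

/-- The Euler derivation `X · d/dX`. It multiplies the coefficient of `X ^ m` by `m`, which avoids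
the index shift of `d/dX`. -/
noncomputable def eulerDerivation (R : Type*) [CommSemiring R] : Derivation R R⟦X⟧ R⟦X⟧ :=
  (X : R⟦X⟧) • d⁄dX R

theorem mk_ite_dvd_mul_one_sub_X_pow {k : ℕ} (hk : k ≠ 0) :
    (mk fun m => if k ∣ m then 1 else 0 : R⟦X⟧) * (1 - X ^ k) = 1 := by
  have hexpand : (mk fun m => if k ∣ m then 1 else 0 : R⟦X⟧) = expand k hk (mk 1) := by
    ext m
    simp [coeff_expand]
  rw [hexpand]
  simpa using congrArg (expand k hk) (mk_one_mul_one_sub_eq_one R)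

theorem isLogDeriv_one_sub_X_pow {k : ℕ} (hk : k ≠ 0) :
    IsLogDeriv (eulerDerivation R) (1 - X ^ k)
      (k • (1 - mk fun m => if k ∣ m then 1 else 0)) := by
  have hθ : eulerDerivation R (1 - X ^ k : R⟦X⟧) = -((k : R⟦X⟧) * X ^ k) := by
    simp [eulerDerivation, Derivation.leibniz_pow, mul_left_comm, mul_pow_sub_one hk]
  rw [IsLogDeriv, hθ, nsmul_eq_mul]
  linear_combination (k : R⟦X⟧) * mk_ite_dvd_mul_one_sub_X_pow (R := R) hk

variable [Fintype ι] [DecidableEq ι]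

/-- The geometric series `∑ n, A ^ n X ^ n = (1 - X A)⁻¹`, as a matrix of power series. -/
def geomSeriesMatrix {R : Type*} [Semiring R] (A : Matrix ι ι R) : Matrix ι ι R⟦X⟧ :=
  .of fun i j => mk fun n => (A ^ n) i j

variable (A : Matrix ι ι R)

theorem geomSeriesMatrix_mul_one_sub_X_smul :
    geomSeriesMatrix A * (1 - (X : R⟦X⟧) • A.map C) = 1 := by
  have hsucc (i j : ι) (n : ℕ) :
      coeff n ((geomSeriesMatrix A * A.map C) i j) = (A ^ (n + 1)) i j := by
    simp [pow_succ, Matrix.mul_apply, geomSeriesMatrix]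
  rw [mul_sub, mul_one, Matrix.mul_smul]
  ext i j n
  rw [Matrix.sub_apply, Matrix.smul_apply, smul_eq_mul, map_sub]
  cases n with
  | zero => by_cases hij : i = j <;> simp [geomSeriesMatrix, hij, Matrix.one_apply]
  | succ n =>
    rw [coeff_succ_X_mul, hsucc]
    by_cases hij : i = j <;> simp [geomSeriesMatrix, hij, Matrix.one_apply, coeff_one]

theorem coeff_trace_one_sub_geomSeriesMatrix {m : ℕ} (hm : m ≠ 0) :
    coeff m (1 - geomSeriesMatrix A).trace = -(A ^ m).trace := by
  simp only [Matrix.trace, Matrix.diag, map_sum, ← Finset.sum_neg_distrib]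
  exact Finset.sum_congr rfl fun i _ => by simp [geomSeriesMatrix, coeff_one, hm]

theorem coe_charpolyRev : (A.charpolyRev : R⟦X⟧) = (1 - (X : R⟦X⟧) • A.map C).det := by
  rw [Matrix.charpolyRev, ← Polynomial.coeToPowerSeries.ringHom_apply, RingHom.map_det]
  congr 1
  ext1 i j
  by_cases hij : i = j <;> simp [hij, (commute_X _).eq]

theorem isLogDeriv_charpolyRev :
    IsLogDeriv (eulerDerivation R) (A.charpolyRev : R⟦X⟧) (1 - geomSeriesMatrix A).trace := by
  have hθ : (1 - (X : R⟦X⟧) • A.map C).map (eulerDerivation R) =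
      (1 - (X : R⟦X⟧) • A.map C) - 1 := by
    ext1 i j
    by_cases hij : i = j <;> simp [hij, eulerDerivation, mul_comm]
  have h := isLogDeriv_det (eulerDerivation R) (geomSeriesMatrix_mul_one_sub_X_smul A)
  rwa [hθ, mul_sub, geomSeriesMatrix_mul_one_sub_X_smul, mul_one, ← coe_charpolyRev] at h

end PowerSeries

section CycleShape

open Polynomial

theorem prod_zpow_mul_prod_pow_toNat_neg {K κ : Type*} [CommGroupWithZero K]
    {s : Finset κ} {f : κ → K} (hf : ∀ i ∈ s, f i ≠ 0) (n : κ → ℤ) :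
    (∏ i ∈ s, f i ^ n i) * ∏ i ∈ s, f i ^ (-n i).toNat = ∏ i ∈ s, f i ^ (n i).toNat := by
  rw [← Finset.prod_mul_distrib]
  refine Finset.prod_congr rfl fun i hi => ?_
  rw [← zpow_natCast, ← zpow_natCast, ← zpow_add₀ (hf i hi)]
  congr 1
  omega

variable {R ι : Type*} [CommRing R] [Fintype ι] [DecidableEq ι] {A : Matrix ι ι R} {b : ℕ →₀ ℤ}

theorem charpolyRev_mul_prod_pow_toNat_neg [IsDomain R] (hb0 : b 0 = 0)
    (hshape : algebraMap R[X] (RatFunc R) A.charpolyRev =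
      ∏ k ∈ b.support, ((1 : RatFunc R) - RatFunc.X ^ k) ^ b k) :
    A.charpolyRev * ∏ k ∈ b.support, (1 - X ^ k) ^ (-b k).toNat =
      ∏ k ∈ b.support, (1 - X ^ k) ^ (b k).toNat := by
  have hinj := RatFunc.algebraMap_injective R
  have hne : ∀ k ∈ b.support, (1 - RatFunc.X ^ k : RatFunc R) ≠ 0 := fun k hk => by
    have hk0 : k ≠ 0 := ne_of_mem_of_not_mem hk (Finsupp.notMem_support_iff.2 hb0)
    have hpoly : (1 - X ^ k : R[X]) ≠ 0 :=
      sub_ne_zero.2 (sub_ne_zero.1 (X_pow_sub_C_ne_zero (Nat.pos_of_ne_zero hk0) 1)).symm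
    simpa using (map_ne_zero_iff _ hinj).2 hpoly
  apply hinj
  simpa [hshape] using prod_zpow_mul_prod_pow_toNat_neg hne b

theorem trace_pow_eq_sum_divisors (hb0 : b 0 = 0)
    (h : A.charpolyRev * ∏ k ∈ b.support, (1 - X ^ k) ^ (-b k).toNat =
      ∏ k ∈ b.support, (1 - X ^ k) ^ (b k).toNat) {m : ℕ} (hm : m ≠ 0) :
    (A ^ m).trace = ∑ k ∈ m.divisors, (k : R) * (b k : R) := by
  have hne : ∀ k ∈ b.support, k ≠ 0 := fun k hk =>
    ne_of_mem_of_not_mem hk (Finsupp.notMem_support_iff.2 hb0)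
  have hcoe := congrArg (coeToPowerSeries.ringHom (R := R)) h
  simp only [map_mul, map_prod, map_pow, map_sub, map_one, coeToPowerSeries.ringHom_apply,
    coe_X] at hcoe
  have hlog := (isLogDeriv_charpolyRev A).eq_sum_zsmul
    (fun k hk => isLogDeriv_one_sub_X_pow (hne k hk))
    (fun k hk => .of_mul_eq_one_right _ (mk_ite_dvd_mul_one_sub_X_pow (hne k hk))) hcoe
  have hneg : -(A ^ m).trace = ∑ k ∈ b.support, b k • k • -(if k ∣ m then 1 else 0 : R) := by
    simpa only [coeff_trace_one_sub_geomSeriesMatrix A hm, map_sum, map_zsmul, map_nsmul, map_sub,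
      PowerSeries.coeff_one, if_neg hm, PowerSeries.coeff_mk, zero_sub] using
      congrArg (PowerSeries.coeff m) hlog
  calc (A ^ m).trace = ∑ k ∈ b.support, if k ∣ m then (k : R) * (b k : R) else 0 := by
        rw [← neg_neg (A ^ m).trace, hneg, ← Finset.sum_neg_distrib]
        refine Finset.sum_congr rfl fun k _ => ?_
        split_ifs <;> simp [mul_comm]
    _ = ∑ k ∈ b.support with k ∣ m, (k : R) * (b k : R) := (Finset.sum_filter _ _).symm
    _ = ∑ k ∈ m.divisors, (k : R) * (b k : R) :=
        Finset.sum_subset (fun k hk => by simp_all) fun k hk hk' => by simp_all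

end CycleShape

theorem fake_monster.stmt10_general {R ι : Type*} [CommRing R] [IsDomain R] [Fintype ι]
    [DecidableEq ι] (A : Matrix ι ι R) (b : ℕ →₀ ℤ) (hb0 : b 0 = 0)
    (hshape : algebraMap (Polynomial R) (RatFunc R) A.charpolyRev =
      ∏ k ∈ b.support, ((1 : RatFunc R) - RatFunc.X ^ k) ^ (b k)) :
    ∀ m : ℕ, 0 < m →
      Matrix.trace (A ^ m) = ∑ k ∈ m.divisors, (k : R) * ((b k : ℤ) : R) :=
  fun _ hm => trace_pow_eq_sum_divisors hb0 (charpolyRev_mul_prod_pow_toNat_neg hb0 hshape)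
    (Nat.ne_zero_of_lt hm)

/-- Let `A` be a square matrix over `ℚ` whose reversed characteristic
polynomial `det(1 - X·A)`, viewed in the field `ℚ(X)` of rational functions, factors as
`∏_{k ≥ 1} (1 - X^k)^{b k}` for a finitely supported `b : ℕ → ℤ` with `b 0 = 0`
(the cycle shape of `A`).  Then for every positive integer `m`, the trace of `A^m`
equals `∑_{k ∣ m} k·b(k)`. -/
theorem fake_monster.stmt10 {ι : Type*} [Fintype ι] [DecidableEq ι]
    (A : Matrix ι ι ℚ) (b : ℕ →₀ ℤ) (hb0 : b 0 = 0)
    (hshape : algebraMap (Polynomial ℚ) (RatFunc ℚ) A.charpolyRev =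
      ∏ k ∈ b.support, ((1 : RatFunc ℚ) - RatFunc.X ^ k) ^ (b k)) :
    ∀ m : ℕ, 0 < m →
      Matrix.trace (A ^ m) = ∑ k ∈ m.divisors, (k : ℚ) * ((b k : ℤ) : ℚ) :=
  fake_monster.stmt10_general A b hb0 hshape
end

section
/- Let ι be a finite type, A : Matrix ι ι ℚ, and let b : ℕ → ℤ be a finitely supported function with b(0) = 0 such that, in the field ℚ(X) of rational functions over ℚ, the image of det(1 - X·A) equals ∏_{k ≥ 1} (1 - X^k)^{b(k)}. Then for every positive integer m, the image of det(1 - X·A^m) in ℚ(X) equals ∏_{k ≥ 1} (1 - X^(k/gcd(k,m)))^(gcd(k,m)·b(k)). -/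
/-!
Let `𝒢 p` be the norm of `p(T)` from `R[X][T]/(T ^ m - X)` to `R[X]`, that is, the product of `p`
over the `m`-th roots of `X`.  It is multiplicative in `p`, so it is enough to compute it on
`det (1 - X • A)` and on `1 - X ^ k`.

Both computations rest on the symmetry `det (p(N)) = det (1 - M ⊗ N) = det (q(M))`, where `p` and
`q` are the reversed characteristic polynomials of `M` and `N`.  Applied to `A` and the companion
matrix of `T ^ m - X` it gives `𝒢 (det (1 - X • A)) = det (1 - X • A ^ m)`.  Applied to two
companion matrices it says that the norm of `1 - a T ^ k` modulo `T ^ m - b` equals the norm of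
`1 - b T ^ m` modulo `T ^ k - a`; since `T ^ m = b` also allows `k` to be reduced modulo `m`, the
Euclidean algorithm evaluates this norm as `(1 - a ^ (m / g) b ^ (k / g)) ^ g` with `g = gcd k m`.
No roots of unity are needed, so the coefficients can lie in any integral domain.
-/

namespace fake_monster

open Polynomial Matrix
open scoped Kronecker

section CharpolyRev

variable {R ι κ : Type*} [CommRing R] [Fintype ι] [DecidableEq ι] [Fintype κ] [DecidableEq κ]

theorem charpolyRev_map {S : Type*} [CommRing S] (f : R →+* S) (M : Matrix ι ι R) :
    (M.map f).charpolyRev = M.charpolyRev.map f := by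
  rw [charpolyRev, charpolyRev, ← coe_mapRingHom, RingHom.map_det]
  congr 1
  ext1 i j
  rcases eq_or_ne i j with rfl | hij <;> simp [*]

theorem det_aeval_charpolyRev (M : Matrix ι ι R) (N : Matrix κ κ R) :
    (aeval N M.charpolyRev).det = (1 - M ⊗ₖ N).det := by
  have blocks : comp ι ι κ κ R ((1 - (X : R[X]) • M.map C).map (aeval N)) = 1 - M ⊗ₖ N := by
    ext ⟨i, k⟩ ⟨j, l⟩
    rcases eq_or_ne i j with rfl | hij <;> simp [one_apply, ← Algebra.smul_def, *]
  rw [charpolyRev, ← blocks]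
  exact det_det _ (aeval N : R[X] →ₐ[R] Matrix κ κ R).toRingHom

theorem det_aeval_charpolyRev_comm (M : Matrix ι ι R) (N : Matrix κ κ R) :
    (aeval N M.charpolyRev).det = (aeval M N.charpolyRev).det := by
  have swap : (1 - N ⊗ₖ M).submatrix (Equiv.prodComm ι κ) (Equiv.prodComm ι κ) = 1 - M ⊗ₖ N := by
    ext ⟨i, k⟩ ⟨j, l⟩
    simp [one_apply, and_comm, mul_comm]
  rw [det_aeval_charpolyRev, det_aeval_charpolyRev, ← swap, det_submatrix_equiv_self]

end CharpolyRev

section Companion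

variable {R : Type*} [CommRing R] {f g : R[X]}

/-- The companion matrix of a monic polynomial `g`: the matrix of multiplication by the root of `g`
on `R[X]/(g)`, in the basis of its powers. -/
noncomputable def companion (hg : g.Monic) : Matrix (Fin g.natDegree) (Fin g.natDegree) R :=
  Algebra.leftMulMatrix (AdjoinRoot.powerBasisAux' hg) (AdjoinRoot.root g)

theorem aeval_companion (hg : g.Monic) (p : R[X]) :
    aeval (companion hg) p =
      Algebra.leftMulMatrix (AdjoinRoot.powerBasisAux' hg) (AdjoinRoot.mk g p) := by
  rw [companion, aeval_algHom_apply, AdjoinRoot.aeval_eq]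

theorem charpoly_companion (hg : g.Monic) : (companion hg).charpoly = g := by
  nontriviality R
  have dvd_charpoly : g ∣ (companion hg).charpoly := by
    rw [← AdjoinRoot.mk_eq_zero]
    apply Algebra.leftMulMatrix_injective (AdjoinRoot.powerBasisAux' hg)
    rw [← aeval_companion, aeval_self_charpoly, map_zero]
  refine eq_of_monic_of_dvd_of_natDegree_le hg (charpoly_monic _) dvd_charpoly ?_
  rw [charpoly_natDegree_eq_dim, Fintype.card_fin]

theorem charpolyRev_companion (hg : g.Monic) : (companion hg).charpolyRev = g.reverse := by
  rw [← reverse_charpoly, charpoly_companion]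

theorem norm_mk_eq_det_aeval_companion (hg : g.Monic) (p : R[X]) :
    Algebra.norm R (AdjoinRoot.mk g p) = (aeval (companion hg) p).det := by
  rw [aeval_companion, Algebra.norm_eq_matrix_det (AdjoinRoot.powerBasisAux' hg)]

theorem norm_mk_charpolyRev {ι : Type*} [Fintype ι] [DecidableEq ι] (hg : g.Monic)
    (M : Matrix ι ι R) :
    Algebra.norm R (AdjoinRoot.mk g M.charpolyRev) = (aeval M g.reverse).det := by
  rw [norm_mk_eq_det_aeval_companion hg, det_aeval_charpolyRev_comm, charpolyRev_companion]

theorem norm_mk_reverse_comm (hf : f.Monic) (hg : g.Monic) :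
    Algebra.norm R (AdjoinRoot.mk f g.reverse) = Algebra.norm R (AdjoinRoot.mk g f.reverse) := by
  rw [← charpolyRev_companion hg, norm_mk_charpolyRev hf, norm_mk_eq_det_aeval_companion hg]

theorem norm_mk_C (hg : g.Monic) (a : R) :
    Algebra.norm R (AdjoinRoot.mk g (C a)) = a ^ g.natDegree := by
  rw [AdjoinRoot.mk_C, ← AdjoinRoot.algebraMap_eq,
    Algebra.norm_algebraMap_of_basis (AdjoinRoot.powerBasisAux' hg), Fintype.card_fin]

end Companion

section Binomial

variable {R : Type*} [CommRing R]

theorem reverse_X_pow_sub_C (n : ℕ) (b : R) :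
    (X ^ n - C b).reverse = 1 - C b * X ^ n := by
  nontriviality R
  rw [reverse, natDegree_X_pow_sub_C, reflect_sub, reflect_C, reflect_monomial, revAt_le le_rfl,
    Nat.sub_self, pow_zero]

theorem mk_one_sub_C_mul_X_pow_mod (k n : ℕ) (a b : R) :
    AdjoinRoot.mk (X ^ n - C b) (1 - C a * X ^ k) =
      AdjoinRoot.mk (X ^ n - C b) (1 - C (a * b ^ (k / n)) * X ^ (k % n)) := by
  have mk_X_pow : AdjoinRoot.mk (X ^ n - C b) (X ^ n) = AdjoinRoot.mk (X ^ n - C b) (C b) :=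
    AdjoinRoot.mk_eq_mk.2 dvd_rfl
  conv_lhs => rw [← Nat.div_add_mod k n, pow_add, pow_mul]
  simp only [map_sub, map_mul, map_pow _ (X ^ n), mk_X_pow, C_pow, map_pow _ (C b), mul_assoc]

theorem norm_mk_one_sub_C_mul_X_pow_comm {k n : ℕ} (hk : k ≠ 0) (hn : n ≠ 0) (a b : R) :
    Algebra.norm R (AdjoinRoot.mk (X ^ n - C b) (1 - C a * X ^ k)) =
      Algebra.norm R (AdjoinRoot.mk (X ^ k - C a) (1 - C b * X ^ n)) := by
  rw [← reverse_X_pow_sub_C k, ← reverse_X_pow_sub_C n,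
    norm_mk_reverse_comm (monic_X_pow_sub_C b hn) (monic_X_pow_sub_C a hk)]

theorem norm_mk_one_sub_C_mul_X_pow (k : ℕ) {n : ℕ} (hn : n ≠ 0) (a b : R) :
    Algebra.norm R (AdjoinRoot.mk (X ^ n - C b) (1 - C a * X ^ k)) =
      (1 - a ^ (n / k.gcd n) * b ^ (k / k.gcd n)) ^ k.gcd n := by
  nontriviality R
  induction k, n using Nat.gcd.induction generalizing a b with
  | H0 n =>
    rw [pow_zero, mul_one, ← C_1, ← C_sub, norm_mk_C (monic_X_pow_sub_C b hn),
      natDegree_X_pow_sub_C, Nat.gcd_zero_left, Nat.div_self hn.bot_lt, Nat.zero_div, pow_one,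
      pow_zero, mul_one]
  | H1 k n hk ih =>
    have exponent_of_a : n / k * (k / k.gcd n) + n % k / k.gcd n = n / k.gcd n := by
      rw [← Nat.mul_div_assoc _ (Nat.gcd_dvd_left k n), ← Nat.add_div_of_dvd_right
        ((Nat.gcd_dvd_left k n).mul_left _), Nat.div_add_mod']
    rw [norm_mk_one_sub_C_mul_X_pow_comm hk.ne' hn, mk_one_sub_C_mul_X_pow_mod, ih hk.ne',
      ← Nat.gcd_rec, mul_pow, ← pow_mul, mul_assoc, ← pow_add, exponent_of_a, mul_comm]

end Binomial

section Graeffe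

variable {R : Type*} [CommRing R]

/-- The `m`-th Dandelin–Graeffe transform: `p` is sent to the norm of `p(T)` from
`R[X][T]/(T ^ m - X)` to `R[X]`.  For `m ≠ 0` it raises reciprocal roots to the `m`-th power; for
`m = 0` the quotient has no finite basis and the norm is the junk value `1`. -/
noncomputable def graeffe (m : ℕ) : R[X] →* R[X] :=
  (Algebra.norm R[X]).comp
    ((AdjoinRoot.mk (X ^ m - C X : R[X][X])).comp (mapRingHom C)).toMonoidHom

theorem graeffe_apply (m : ℕ) (p : R[X]) :
    graeffe m p = Algebra.norm R[X] (AdjoinRoot.mk (X ^ m - C X) (p.map C)) :=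
  rfl

theorem graeffe_charpolyRev {ι : Type*} [Fintype ι] [DecidableEq ι] {m : ℕ} (hm : m ≠ 0)
    (A : Matrix ι ι R) : graeffe m A.charpolyRev = (A ^ m).charpolyRev := by
  rw [graeffe_apply, ← charpolyRev_map, norm_mk_charpolyRev (monic_X_pow_sub_C X hm),
    reverse_X_pow_sub_C, charpolyRev, Matrix.map_pow, C_mul']
  simp only [map_sub, map_one, map_smul, map_pow, aeval_X]

theorem graeffe_one_sub_X_pow {m : ℕ} (hm : m ≠ 0) (k : ℕ) :
    graeffe m (1 - X ^ k : R[X]) = (1 - X ^ (k / k.gcd m)) ^ k.gcd m := by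
  simpa [graeffe_apply] using norm_mk_one_sub_C_mul_X_pow k hm (1 : R[X]) X

end Graeffe

section IntegerExponents

variable {G H M N ι : Type*} [CommGroupWithZero G] [CommGroupWithZero H] [CommMonoid M]
  [CommMonoid N] {s : Finset ι}

theorem eq_prod_zpow_iff {q : ι → G} (hq : ∀ i ∈ s, q i ≠ 0) (b : ι → ℤ) (p : G) :
    p = ∏ i ∈ s, q i ^ b i ↔
      p * ∏ i ∈ s, q i ^ (-b i).toNat = ∏ i ∈ s, q i ^ (b i).toNat := by
  have quotient : ∏ i ∈ s, q i ^ b i =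
      (∏ i ∈ s, q i ^ (b i).toNat) / ∏ i ∈ s, q i ^ (-b i).toNat := by
    rw [← Finset.prod_div_distrib]
    refine Finset.prod_congr rfl fun i hi => ?_
    rw [← zpow_natCast, ← zpow_natCast, ← zpow_sub₀ (hq i hi), Int.toNat_sub_toNat_neg]
  rw [quotient, eq_div_iff (Finset.prod_ne_zero_iff.2 fun i hi => pow_ne_zero _ (hq i hi))]

theorem map_eq_prod_zpow_of_injective {f : M →* G} (hf : Function.Injective f) (φ : M →* N)
    (f' : N →* H) {q : ι → M} (hq : ∀ i ∈ s, f (q i) ≠ 0) (hq' : ∀ i ∈ s, f' (φ (q i)) ≠ 0)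
    {b : ι → ℤ} {p : M} (hp : f p = ∏ i ∈ s, f (q i) ^ b i) :
    f' (φ p) = ∏ i ∈ s, f' (φ (q i)) ^ b i := by
  rw [eq_prod_zpow_iff hq] at hp
  rw [eq_prod_zpow_iff hq']
  simp only [← map_pow, ← map_prod, ← map_mul] at hp ⊢
  rw [hf hp]

end IntegerExponents

theorem one_sub_X_pow_ne_zero {R : Type*} [CommRing R] [Nontrivial R] {k : ℕ} (hk : k ≠ 0) :
    (1 - X ^ k : R[X]) ≠ 0 := by
  rw [← neg_ne_zero, neg_sub]
  exact X_pow_sub_C_ne_zero hk.bot_lt 1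

theorem stmt12_general {R ι : Type*} [CommRing R] [IsDomain R] [Fintype ι] [DecidableEq ι]
    (A : Matrix ι ι R) (b : ℕ →₀ ℤ) (hb0 : b 0 = 0)
    (hshape : algebraMap R[X] (RatFunc R) A.charpolyRev =
      ∏ k ∈ b.support, ((1 : RatFunc R) - RatFunc.X ^ k) ^ (b k))
    (m : ℕ) (hm : 0 < m) :
    algebraMap R[X] (RatFunc R) (A ^ m).charpolyRev =
      ∏ k ∈ b.support,
        ((1 : RatFunc R) - RatFunc.X ^ (k / Nat.gcd k m)) ^ ((Nat.gcd k m : ℤ) * b k) := by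
  let toRatFunc : R[X] →* RatFunc R := (algebraMap R[X] (RatFunc R)).toMonoidHom
  have exponent_ne_zero (k : ℕ) (hk : k ∈ b.support) : k ≠ 0 :=
    fun h => Finsupp.mem_support_iff.1 hk (h ▸ hb0)
  have factor_ne_zero (k : ℕ) (hk : k ∈ b.support) : (1 - X ^ k : R[X]) ≠ 0 :=
    one_sub_X_pow_ne_zero (exponent_ne_zero k hk)
  have graeffe_factor_ne_zero (k : ℕ) (hk : k ∈ b.support) : graeffe m (1 - X ^ k : R[X]) ≠ 0 := by
    rw [graeffe_one_sub_X_pow hm.ne']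
    exact pow_ne_zero _ (one_sub_X_pow_ne_zero
      (Nat.div_gcd_pos_of_pos_left m (exponent_ne_zero k hk).bot_lt).ne')
  have graeffe_shape := map_eq_prod_zpow_of_injective (f := toRatFunc)
    (RatFunc.algebraMap_injective R) (graeffe m) toRatFunc
    (fun k hk => RatFunc.algebraMap_ne_zero (factor_ne_zero k hk))
    (fun k hk => RatFunc.algebraMap_ne_zero (graeffe_factor_ne_zero k hk))
    (p := A.charpolyRev) (b := b) (by simpa [toRatFunc] using hshape)
  simpa [toRatFunc, graeffe_charpolyRev hm.ne', graeffe_one_sub_X_pow hm.ne', _root_.zpow_mul]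
    using graeffe_shape

end fake_monster

/-- Let `A` be a square matrix over `ℚ` with cycle shape `b`, i.e. the
image in `ℚ(X)` of `det(1 - X·A)` equals `∏_{k ≥ 1} (1 - X^k)^{b k}` for a finitely
supported `b : ℕ → ℤ` with `b 0 = 0`.  Then for every positive integer `m`, the image in
`ℚ(X)` of `det(1 - X·A^m)` equals `∏_{k ≥ 1} (1 - X^(k/gcd(k,m)))^(gcd(k,m)·b(k))`. -/
theorem fake_monster.stmt12 {ι : Type*} [Fintype ι] [DecidableEq ι]
    (A : Matrix ι ι ℚ) (b : ℕ →₀ ℤ) (hb0 : b 0 = 0)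
    (hshape : algebraMap (Polynomial ℚ) (RatFunc ℚ) A.charpolyRev =
      ∏ k ∈ b.support, ((1 : RatFunc ℚ) - RatFunc.X ^ k) ^ (b k)) :
    ∀ m : ℕ, 0 < m →
      algebraMap (Polynomial ℚ) (RatFunc ℚ) (A ^ m).charpolyRev =
        ∏ k ∈ b.support,
          ((1 : RatFunc ℚ) - RatFunc.X ^ (k / Nat.gcd k m)) ^ ((Nat.gcd k m : ℤ) * b k) :=
  fake_monster.stmt12_general A b hb0 hshape
end

section
/- Let ι be a finite type and A : Matrix ι ι ℚ a matrix of finite multiplicative order (A^r = 1 for some positive integer r). Let b : ℕ → ℤ be a finitely supported function with b(0) = 0 such that, in the field ℚ(X) of rational functions over ℚ, the image of det(1 - X·A) equals ∏_{k ≥ 1} (1 - X^k)^{b(k)}. Then the multiplicative order of A equals the least common multiple of the set {k ≥ 1 : b(k) ≠ 0} (with the convention that the lcm of the empty set is 1). -/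
/-!
Over a separably closed field in which the relevant exponents are nonzero, the polynomial
`1 - X ^ k` has a simple root at each `z` with `z ^ k = 1` and no other root, so a polynomial `p` of
cycle shape `b` vanishes at `z` to order `∑ b k`, summed over the `k` with `z ^ k = 1`. For `z` of
order `d` these are the multiples `k` of `d`. Hence every root of `p` has order dividing some
element of the support of `b`. Conversely, suppose that all roots of `p` have order dividing `m`,
and choose `d` maximal under divisibility among the elements of the support that do not divide `m`;
a proper multiple of `d` in the support would divide `m`, so the sum for `d` is `b d ≠ 0`, and a
primitive `d`-th root of unity is a root of `p`, which is absurd. Thus the `m` killing all roots of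
`p` are the multiples of the lcm of the support. For `p = det (1 - X A)` the roots are the inverses
of the eigenvalues of `A`, and since `A` is annihilated by the separable polynomial `X ^ r - 1`,
they satisfy `z ^ m = 1` if and only if `A ^ m = 1`.
-/

open Polynomial

theorem mul_prod_pow_neg_toNat {R K α : Type*} [CommSemiring R] [Semifield K] [Algebra R K]
    [FaithfulSMul R K] {s : Finset α} {f : α → R} (hf : ∀ i ∈ s, f i ≠ 0) {e : α → ℤ} {p : R}
    (h : algebraMap R K p = ∏ i ∈ s, algebraMap R K (f i) ^ e i) :
    p * ∏ i ∈ s, f i ^ (-e i).toNat = ∏ i ∈ s, f i ^ (e i).toNat := by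
  have hinj := FaithfulSMul.algebraMap_injective R K
  apply hinj
  rw [map_mul, h, map_prod, map_prod, ← Finset.prod_mul_distrib]
  refine Finset.prod_congr rfl fun i hi => ?_
  have hfi : algebraMap R K (f i) ≠ 0 := (map_ne_zero_iff _ hinj).2 (hf i hi)
  rw [map_pow, map_pow, ← zpow_natCast, ← zpow_natCast, ← zpow_add₀ hfi]
  congr 1
  omega

theorem rootMultiplicity_prod_pow {R α : Type*} [CommRing R] [IsDomain R] {s : Finset α}
    {f : α → R[X]} (hf : ∀ i ∈ s, f i ≠ 0) (n : α → ℕ) (z : R) :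
    (∏ i ∈ s, f i ^ n i).rootMultiplicity z = ∑ i ∈ s, n i * (f i).rootMultiplicity z := by
  classical
  have hprod : ∏ i ∈ s, f i ^ n i ≠ 0 :=
    Finset.prod_ne_zero_iff.2 fun i hi => pow_ne_zero _ (hf i hi)
  simp only [← count_roots, roots_prod _ _ hprod, Multiset.count_bind, roots_pow,
    Multiset.count_nsmul]
  rfl

theorem rootMultiplicity_eq_sum_of_mul_prod_pow {R α : Type*} [CommRing R] [IsDomain R]
    {s : Finset α} {f : α → R[X]} (hf : ∀ i ∈ s, f i ≠ 0) {e : α → ℤ} {p : R[X]}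
    (h : p * ∏ i ∈ s, f i ^ (-e i).toNat = ∏ i ∈ s, f i ^ (e i).toNat) (z : R) :
    (p.rootMultiplicity z : ℤ) = ∑ i ∈ s, e i * (f i).rootMultiplicity z := by
  have hne (n : α → ℕ) : ∏ i ∈ s, f i ^ n i ≠ 0 :=
    Finset.prod_ne_zero_iff.2 fun i hi => pow_ne_zero _ (hf i hi)
  have hmult := congrArg (fun q => (q.rootMultiplicity z : ℤ)) h
  simp only [rootMultiplicity_mul (h ▸ hne _), rootMultiplicity_prod_pow hf] at hmult
  push_cast at hmult
  rw [← eq_sub_iff_add_eq, ← Finset.sum_sub_distrib] at hmult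
  rw [hmult]
  refine Finset.sum_congr rfl fun i _ => ?_
  rw [← sub_mul, Int.toNat_sub_toNat_neg]

theorem rootMultiplicity_one_sub_X_pow {F : Type*} [Field F] [DecidableEq F] {k : ℕ}
    (hk : (k : F) ≠ 0) (z : F) :
    (1 - X ^ k : F[X]).rootMultiplicity z = if z ^ k = 1 then 1 else 0 := by
  have hsep : (1 - X ^ k : F[X]).Separable :=
    (X_pow_sub_one_separable_iff.2 hk).of_dvd (dvd_sub_comm.1 dvd_rfl)
  split_ifs with hz
  · refine le_antisymm (rootMultiplicity_le_one_of_separable hsep z) ?_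
    exact (rootMultiplicity_pos hsep.ne_zero).2 (by simp [hz])
  · exact rootMultiplicity_eq_zero (by simpa [sub_eq_zero, eq_comm (a := (1 : F))] using hz)

section Spectrum

variable {F S : Type*} [Field F] [Ring S] [Algebra F S] {a : S} {p : F[X]}

theorem isUnit_aeval_of_forall_mem_spectrum (hsplits : p.Splits) (hp : p ≠ 0)
    (h : ∀ z ∈ spectrum F a, p.eval z ≠ 0) : IsUnit (aeval a p) := by
  by_contra hunit
  have hlead : IsUnit (aeval a (C p.leadingCoeff)) :=
    (isUnit_C.2 (leadingCoeff_ne_zero.2 hp).isUnit).map _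
  obtain ⟨z, hz, hpz⟩ := spectrum.exists_mem_of_not_isUnit_aeval_prod (a := a) (p := p)
    fun hprod => hunit <| by
      rw [hsplits.eq_prod_roots, map_mul]
      exact hlead.mul hprod
  exact h z hz hpz

theorem aeval_eq_zero_iff_forall_mem_spectrum (hsplits : p.Splits) (hsep : p.Separable)
    (hp : aeval a p = 0) (q : F[X]) :
    aeval a q = 0 ↔ ∀ z ∈ spectrum F a, q.eval z = 0 := by
  classical
  constructor
  · intro hq z hz
    have : Nontrivial S := not_subsingleton_iff_nontrivial.1 fun _ => by
      simp [spectrum.of_subsingleton] at hz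
    simpa [hq] using spectrum.subset_polynomial_aeval a q ⟨z, hz, rfl⟩
  · intro hq
    set g := EuclideanDomain.gcd p q
    obtain ⟨s, hs⟩ : g ∣ p := EuclideanDomain.gcd_dvd_left p q
    have hcop : IsCoprime g s := (hs ▸ hsep).isCoprime
    have hs_unit : IsUnit (aeval a s) := by
      have hsp : s ∣ p := Dvd.intro_left g hs.symm
      refine isUnit_aeval_of_forall_mem_spectrum (hsplits.of_dvd hsep.ne_zero hsp)
        (ne_zero_of_dvd_ne_zero hsep.ne_zero hsp) fun z hz hsz => ?_
      have hpz : p.eval z = 0 := by rw [hs, eval_mul, hsz, mul_zero]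
      have hgz : g.eval z = 0 := eval_gcd_eq_zero hpz (hq z hz)
      obtain ⟨u, v, huv⟩ := hcop
      simpa [hgz, hsz] using congrArg (eval z) huv
    have hg : aeval a g = 0 := by
      rw [← hs_unit.mul_left_eq_zero, ← map_mul, ← hs, hp]
    exact aeval_eq_zero_of_dvd_aeval_eq_zero (EuclideanDomain.gcd_dvd_right p q) hg

end Spectrum

section Matrix

variable {n : Type*} [Fintype n] [DecidableEq n]

theorem orderOf_map_of_injective {R S : Type*} [Semiring R] [Semiring S] {φ : R →+* S}
    (hφ : Function.Injective φ) (M : Matrix n n R) : orderOf (M.map φ) = orderOf M :=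
  orderOf_injective φ.mapMatrix.toMonoidHom (Matrix.map_injective hφ) M

theorem charpolyRev_map {R S : Type*} [CommRing R] [CommRing S] (M : Matrix n n R) (φ : R →+* S) :
    (M.map φ).charpolyRev = M.charpolyRev.map φ := by
  rw [Matrix.charpolyRev, Matrix.charpolyRev, ← coe_mapRingHom, RingHom.map_det]
  congr 1
  ext i j : 1
  simp [Matrix.one_apply, apply_ite]

theorem eval_charpolyRev_eq_det {R : Type*} [CommRing R] (M : Matrix n n R) (r : R) :
    M.charpolyRev.eval r = (1 - r • M).det := by
  rw [Matrix.charpolyRev, ← coe_evalRingHom, RingHom.map_det]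
  congr 1
  ext i j
  simp [Matrix.one_apply, apply_ite (eval r), mul_comm r]

theorem isRoot_charpolyRev_iff_inv_mem_spectrum {F : Type*} [Field F] (M : Matrix n n F)
    {z : F} (hz : z ≠ 0) : M.charpolyRev.IsRoot z ↔ z⁻¹ ∈ spectrum F M := by
  have hfactor : 1 - z • M = z • (algebraMap F (Matrix n n F) z⁻¹ - M) := by
    rw [smul_sub, Algebra.algebraMap_eq_smul_one, smul_smul, mul_inv_cancel₀ hz, one_smul]
  rw [IsRoot.def, eval_charpolyRev_eq_det, hfactor, Matrix.det_smul, spectrum.mem_iff,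
    Matrix.isUnit_iff_isUnit_det, isUnit_iff_ne_zero, not_not]
  simp [hz]

theorem pow_eq_one_iff_forall_isRoot_charpolyRev {F : Type*} [Field F] [IsSepClosed F]
    {M : Matrix n n F} {r : ℕ} (hr : (r : F) ≠ 0) (hM : M ^ r = 1) (m : ℕ) :
    M ^ m = 1 ↔ ∀ z, M.charpolyRev.IsRoot z → z ^ m = 1 := by
  have hunit : IsUnit M := IsUnit.of_pow_eq_one hM (by rintro rfl; simp at hr)
  have hsep : (X ^ r - 1 : F[X]).Separable := X_pow_sub_one_separable_iff.2 hr
  have hspec := aeval_eq_zero_iff_forall_mem_spectrum (a := M)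
    (IsSepClosed.splits_of_separable _ hsep) hsep (by simp [hM]) (X ^ m - 1)
  simp only [map_sub, map_pow, aeval_X, map_one, eval_sub, eval_pow, eval_X, eval_one,
    sub_eq_zero] at hspec
  rw [hspec]
  constructor
  · intro h z hz
    have hz0 : z ≠ 0 := by rintro rfl; simp at hz
    rw [← inv_eq_one, ← inv_pow]
    exact h _ ((isRoot_charpolyRev_iff_inv_mem_spectrum M hz0).1 hz)
  · intro h z hz
    have hz0 : z ≠ 0 := by rintro rfl; exact spectrum.zero_notMem F hunit hz
    rw [← inv_eq_one, ← inv_pow]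
    exact h _ ((isRoot_charpolyRev_iff_inv_mem_spectrum M (inv_ne_zero hz0)).2 (by rwa [inv_inv]))

end Matrix

theorem lcm_support_dvd_of_sum_multiples {M : Type*} [AddCommMonoid M] {b : ℕ →₀ M} {n : ℕ}
    (h : ∀ d ∈ b.support, ∑ k ∈ b.support with d ∣ k, b k ≠ 0 → d ∣ n) :
    b.support.lcm id ∣ n := by
  by_contra hlcm
  obtain ⟨k, hk, hkn⟩ : ∃ k ∈ b.support, ¬k ∣ n := by simpa [Finset.lcm_dvd_iff] using hlcm
  -- A `d` with the fewest multiples in the support is maximal under divisibility; unlike the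
  -- largest `d`, it is so even when the support contains `0`.
  obtain ⟨d, hd, hmin⟩ := Finset.exists_min_image {k ∈ b.support | ¬k ∣ n}
    (fun d => Finset.card {k ∈ b.support | d ∣ k}) ⟨k, by grind⟩
  rw [Finset.mem_filter] at hd
  have hsingle : {k ∈ b.support | d ∣ k} = ({d} : Finset ℕ) := by
    refine Finset.eq_singleton_iff_unique_mem.2 ⟨by simpa using hd.1, fun m hm => ?_⟩
    obtain ⟨hm, hdm⟩ := Finset.mem_filter.1 hm
    have hmn : ¬m ∣ n := fun hmn => hd.2 (hdm.trans hmn)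
    have heq := Finset.eq_of_subset_of_card_le
      (Finset.monotone_filter_right b.support fun _ _ hmk => hdm.trans hmk)
      (hmin m (Finset.mem_filter.2 ⟨hm, hmn⟩))
    have hmd : d ∈ ({k ∈ b.support | m ∣ k} : Finset ℕ) := by simpa [heq] using hd.1
    exact Nat.dvd_antisymm (Finset.mem_filter.1 hmd).2 hdm
  exact hd.2 (h d hd.1 (by simpa [hsingle] using hd.1))

/-- The cycle shape condition `p = ∏ (1 - X ^ k) ^ b k` with denominators cleared: the factors with
negative exponent stand on the left-hand side, so that no field of fractions is needed and the
condition is stable under base change. -/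
def HasCycleShape {R : Type*} [CommRing R] (p : R[X]) (b : ℕ →₀ ℤ) : Prop :=
  p * ∏ k ∈ b.support, (1 - X ^ k) ^ (-b k).toNat = ∏ k ∈ b.support, (1 - X ^ k) ^ (b k).toNat

theorem one_sub_X_pow_ne_zero {R : Type*} [Ring R] [Nontrivial R] {k : ℕ} (hk : k ≠ 0) :
    (1 - X ^ k : R[X]) ≠ 0 := fun h => by
  simpa [coeff_X_pow, hk.symm] using congrArg (coeff · 0) h

namespace HasCycleShape

theorem of_ratFunc {R : Type*} [CommRing R] [IsDomain R] {p : R[X]} {b : ℕ →₀ ℤ} (hb : b 0 = 0)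
    (h : algebraMap R[X] (RatFunc R) p =
      ∏ k ∈ b.support, ((1 : RatFunc R) - RatFunc.X ^ k) ^ b k) :
    HasCycleShape p b := by
  have hne : ∀ k ∈ b.support, (1 - X ^ k : R[X]) ≠ 0 := fun k hk =>
    one_sub_X_pow_ne_zero (by rintro rfl; exact Finsupp.mem_support_iff.1 hk hb)
  exact mul_prod_pow_neg_toNat (K := RatFunc R) hne (by simpa using h)

theorem map {R S : Type*} [CommRing R] [CommRing S] {p : R[X]} {b : ℕ →₀ ℤ}
    (h : HasCycleShape p b) (φ : R →+* S) : HasCycleShape (p.map φ) b := by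
  simpa [HasCycleShape, Polynomial.map_prod] using congrArg (Polynomial.map φ) h

variable {F : Type*} [Field F] {p : F[X]} {b : ℕ →₀ ℤ}

theorem rootMultiplicity_eq_sum [DecidableEq F] (h : HasCycleShape p b)
    (hb : ∀ k ∈ b.support, (k : F) ≠ 0) (z : F) :
    (p.rootMultiplicity z : ℤ) = ∑ k ∈ b.support with z ^ k = 1, b k := by
  have hne : ∀ k ∈ b.support, (1 - X ^ k : F[X]) ≠ 0 := fun k hk =>
    one_sub_X_pow_ne_zero (by rintro rfl; exact hb 0 hk Nat.cast_zero)
  rw [rootMultiplicity_eq_sum_of_mul_prod_pow hne h, Finset.sum_filter]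
  refine Finset.sum_congr rfl fun k hk => ?_
  rw [rootMultiplicity_one_sub_X_pow (hb k hk)]
  split_ifs <;> simp

theorem forall_isRoot_pow_eq_one_iff [IsSepClosed F] (h : HasCycleShape p b) (hp : p ≠ 0)
    (hb : ∀ k ∈ b.support, (k : F) ≠ 0) (m : ℕ) :
    (∀ z, p.IsRoot z → z ^ m = 1) ↔ b.support.lcm id ∣ m := by
  classical
  have hroot (z : F) : p.IsRoot z ↔ ∑ k ∈ b.support with z ^ k = 1, b k ≠ 0 := by
    rw [← rootMultiplicity_pos hp, ← h.rootMultiplicity_eq_sum hb, Nat.cast_ne_zero,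
      Nat.pos_iff_ne_zero]
  simp only [hroot]
  constructor
  · intro hpow
    refine lcm_support_dvd_of_sum_multiples fun d hd hsum => ?_
    have : NeZero (d : F) := ⟨hb d hd⟩
    obtain ⟨z, hz⟩ := HasEnoughRootsOfUnity.exists_primitiveRoot F d
    rw [← hz.pow_eq_one_iff_dvd]
    exact hpow z (by simpa only [hz.pow_eq_one_iff_dvd] using hsum)
  · intro hm z hsum
    obtain ⟨k, hk, -⟩ := Finset.exists_ne_zero_of_sum_ne_zero hsum
    obtain ⟨hk, hzk⟩ := Finset.mem_filter.1 hk
    exact orderOf_dvd_iff_pow_eq_one.1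
      ((orderOf_dvd_of_pow_eq_one hzk).trans ((Finset.dvd_lcm hk).trans hm))

theorem orderOf_eq_lcm_support [IsSepClosed F] {n : Type*} [Fintype n] [DecidableEq n]
    {M : Matrix n n F} (h : HasCycleShape M.charpolyRev b) (hM : (orderOf M : F) ≠ 0)
    (hb : ∀ k ∈ b.support, (k : F) ≠ 0) : orderOf M = b.support.lcm id := by
  have hne : M.charpolyRev ≠ 0 := fun h0 => by simpa [h0] using M.eval_charpolyRev
  refine Nat.dvd_right_iff_eq.1 fun m => ?_
  rw [orderOf_dvd_iff_pow_eq_one,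
    pow_eq_one_iff_forall_isRoot_charpolyRev hM (pow_orderOf_eq_one M),
    h.forall_isRoot_pow_eq_one_iff hne hb]

theorem orderOf_eq_lcm_support_of_injective [IsSepClosed F] {R n : Type*} [CommRing R] [Fintype n]
    [DecidableEq n] {A : Matrix n n R} (h : HasCycleShape A.charpolyRev b) {φ : R →+* F}
    (hφ : Function.Injective φ) (hA : (orderOf A : R) ≠ 0) (hb : ∀ k ∈ b.support, (k : R) ≠ 0) :
    orderOf A = b.support.lcm id := by
  have hcast {k : ℕ} (hk : (k : R) ≠ 0) : (k : F) ≠ 0 := by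
    rw [← map_natCast φ]
    exact (map_ne_zero_iff φ hφ).2 hk
  have hmap : HasCycleShape (A.map φ).charpolyRev b := by
    rw [charpolyRev_map]
    exact h.map φ
  rw [← orderOf_map_of_injective hφ A] at hA ⊢
  exact hmap.orderOf_eq_lcm_support (hcast hA) fun k hk => hcast (hb k hk)

end HasCycleShape

theorem fake_monster.stmt13_general {ι R : Type*} [Fintype ι] [DecidableEq ι] [CommRing R]
    [IsDomain R] (A : Matrix ι ι R) (hA : (orderOf A : R) ≠ 0)
    (b : ℕ →₀ ℤ) (hb : ∀ k ∈ b.support, (k : R) ≠ 0)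
    (hshape : algebraMap R[X] (RatFunc R) A.charpolyRev =
      ∏ k ∈ b.support, ((1 : RatFunc R) - RatFunc.X ^ k) ^ b k) :
    orderOf A = b.support.lcm id := by
  have hb0 : b 0 = 0 := Finsupp.notMem_support_iff.1 fun h0 => hb 0 h0 Nat.cast_zero
  let φ : R →+* AlgebraicClosure (FractionRing R) :=
    (algebraMap (FractionRing R) _).comp (algebraMap R (FractionRing R))
  have hφ : Function.Injective φ :=
    (algebraMap (FractionRing R) _).injective.comp (IsFractionRing.injective R _)
  exact (HasCycleShape.of_ratFunc hb0 hshape).orderOf_eq_lcm_support_of_injective hφ hA hb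

/-- Let `A` be a square matrix over `ℚ` of finite multiplicative order,
with cycle shape `b` (i.e. the image in `ℚ(X)` of `det(1 - X·A)` equals
`∏_{k ≥ 1} (1 - X^k)^{b k}` for a finitely supported `b : ℕ → ℤ` with `b 0 = 0`).
Then the multiplicative order of `A` equals the least common multiple of
`{k ≥ 1 : b k ≠ 0}` (the lcm of the empty set being `1`). -/
theorem fake_monster.stmt13 {ι : Type*} [Fintype ι] [DecidableEq ι]
    (A : Matrix ι ι ℚ) (hfin : ∃ r : ℕ, 0 < r ∧ A ^ r = 1)
    (b : ℕ →₀ ℤ) (hb0 : b 0 = 0)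
    (hshape : algebraMap (Polynomial ℚ) (RatFunc ℚ) A.charpolyRev =
      ∏ k ∈ b.support, ((1 : RatFunc ℚ) - RatFunc.X ^ k) ^ (b k)) :
    orderOf A = b.support.lcm id := by
  have hA : orderOf A ≠ 0 := (orderOf_pos_iff.2 (isOfFinOrder_iff_pow_eq_one.2 hfin)).ne'
  have hb : ∀ k ∈ b.support, k ≠ 0 := by rintro _ hk rfl; exact Finsupp.mem_support_iff.1 hk hb0
  exact fake_monster.stmt13_general A (mod_cast hA) b (mod_cast hb) hshape
end

section
/- Let ι be a finite type and A : Matrix ι ι ℚ a matrix of finite multiplicative order (A^r = 1 for some positive integer r). Let b : ℕ → ℤ be a finitely supported function with b(0) = 0 such that, in the field ℚ(X) of rational functions over ℚ, the image of det(1 - X·A) equals ∏_{k ≥ 1} (1 - X^k)^{b(k)}. Then the dimension over ℚ of the fixed subspace {v : A·v = v} equals ∑_{k ≥ 1} b(k). -/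
/-!
Both sides compute the order at `X = 1` of the same rational function. The factor `1 - X ^ k` has a
simple zero at `1`, so the product has order `∑ b k` there. The order of `det (1 - X A)` at `1` is
the algebraic multiplicity of the eigenvalue `1`, since `det (1 - X A)` is the reverse of the
characteristic polynomial, and for semisimple `A` it equals the geometric multiplicity, which is
the dimension of the fixed subspace. A matrix of finite order is semisimple because it is
annihilated by the separable polynomial `X ^ r - 1`.
-/

open Polynomial

theorem reverse_pow_of_noZeroDivisors {R : Type*} [Semiring R] [NoZeroDivisors R] (p : R[X])
    (n : ℕ) : (p ^ n).reverse = p.reverse ^ n := by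
  induction n with
  | zero => rw [pow_zero, pow_zero, ← C_1, reverse_C]
  | succ n ih => rw [pow_succ, reverse_mul_of_domain, ih, pow_succ]

section Field

variable {K : Type*} [Field K]

theorem reverse_X_sub_C {a : K} (ha : a ≠ 0) :
    (X - C a).reverse = C (-a) * (X - C a⁻¹) := by
  have hX : (X : K[X]).reverse = 1 := by
    rw [← mul_one X, ← C_1, reverse_X_mul, reverse_C]
  rw [sub_eq_add_neg, ← C_neg, reverse_add_C, hX, natDegree_X, mul_sub, ← C_mul, neg_mul,
    mul_inv_cancel₀ ha, C_neg, C_neg, C_1]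
  ring

theorem isRoot_inv_reverse_iff (p : K[X]) {a : K} (ha : a ≠ 0) :
    p.reverse.IsRoot a⁻¹ ↔ p.IsRoot a := by
  let : Invertible a := invertibleOfNonzero ha
  simpa only [invOf_eq_inv, eval₂_id, IsRoot.def] using eval₂_reverse_eq_zero_iff (RingHom.id K) a p

theorem rootMultiplicity_inv_reverse (p : K[X]) {a : K} (ha : a ≠ 0) :
    p.reverse.rootMultiplicity a⁻¹ = p.rootMultiplicity a := by
  rcases eq_or_ne p 0 with rfl | hp
  · rw [reverse_zero, rootMultiplicity_zero, rootMultiplicity_zero]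
  obtain ⟨q, hpq, hq⟩ := exists_eq_pow_rootMultiplicity_mul_and_not_dvd p hp a
  set n := p.rootMultiplicity a
  have hq₀ : q ≠ 0 := by
    rintro rfl
    exact hq (dvd_zero _)
  have hroot : ¬ q.reverse.IsRoot a⁻¹ := by
    rwa [isRoot_inv_reverse_iff q ha, ← dvd_iff_isRoot]
  have hc : C ((-a) ^ n) * q.reverse ≠ 0 :=
    mul_ne_zero (C_ne_zero.2 (pow_ne_zero n (neg_ne_zero.2 ha))) (reverse_eq_zero.not.2 hq₀)
  have hreverse : p.reverse = C ((-a) ^ n) * q.reverse * (X - C a⁻¹) ^ n := by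
    rw [hpq, reverse_mul_of_domain, reverse_pow_of_noZeroDivisors, reverse_X_sub_C ha, mul_pow,
      C_pow]
    ring
  rw [hreverse, rootMultiplicity_mul_X_sub_C_pow hc, rootMultiplicity_mul hc, rootMultiplicity_C,
    rootMultiplicity_eq_zero hroot, zero_add, zero_add]

theorem rootMultiplicity_one_X_pow_sub_one {k : ℕ} (hk : (k : K) ≠ 0) :
    (X ^ k - 1 : K[X]).rootMultiplicity 1 = 1 := by
  have hsep : (X ^ k - 1 : K[X]).Separable := X_pow_sub_one_separable_iff.2 hk
  have hroot : (X ^ k - 1 : K[X]).IsRoot 1 := by simp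
  exact le_antisymm (rootMultiplicity_le_one_of_separable hsep 1)
    ((rootMultiplicity_pos hsep.ne_zero).2 hroot)

section PlaceAt

open IsDedekindDomain.HeightOneSpectrum WithZero

theorem withZero_exp_sum {α M : Type*} [AddCommMonoid M] (s : Finset α) (f : α → M) :
    exp (∑ i ∈ s, f i) = ∏ i ∈ s, exp (f i) := by
  induction s using Finset.cons_induction with
  | empty => rw [Finset.sum_empty, Finset.prod_empty, exp_zero]
  | cons i s hi ih => rw [Finset.sum_cons, Finset.prod_cons, exp_add, ih]

/-- The place of `K(X)` at the point `a` of the affine line, as the prime ideal `(X - a)` of `K[X]`.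
Its adic valuation on `RatFunc K` is multiplicative: it sends a function of order `n` at `a` to
`exp (-n)`. -/
noncomputable def placeAt (a : K) : IsDedekindDomain.HeightOneSpectrum K[X] where
  asIdeal := Ideal.span {X - C a}
  isPrime := (Ideal.span_singleton_prime (X_sub_C_ne_zero a)).2 (prime_X_sub_C a)
  ne_bot := Ideal.span_singleton_eq_bot.not.2 (X_sub_C_ne_zero a)

theorem placeAt_valuation_algebraMap (a : K) {p : K[X]} (hp : p ≠ 0) :
    (placeAt a).valuation (RatFunc K) (algebraMap K[X] (RatFunc K) p) =
      exp (-(p.rootMultiplicity a : ℤ)) := by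
  classical
  have hmult : multiplicity (placeAt a).asIdeal (Ideal.span {p}) = p.rootMultiplicity a := by
    rw [rootMultiplicity_eq_multiplicity, if_neg hp]
    exact multiplicity_eq_of_emultiplicity_eq Ideal.emultiplicity_eq_emultiplicity_span
  rw [valuation_of_algebraMap, intValuation_eq_exp_neg_multiplicity _ hp, hmult]

theorem placeAt_one_valuation_one_sub_X_pow {k : ℕ} (hk : (k : K) ≠ 0) :
    (placeAt (1 : K)).valuation (RatFunc K) (1 - RatFunc.X ^ k) = exp (-1) := by
  have hne : (X ^ k - 1 : K[X]) ≠ 0 := (X_pow_sub_one_separable_iff.2 hk).ne_zero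
  have hmap : algebraMap K[X] (RatFunc K) (X ^ k - 1) = RatFunc.X ^ k - 1 := by
    rw [map_sub, map_pow, map_one, RatFunc.algebraMap_X]
  rw [Valuation.map_sub_swap, ← hmap, placeAt_valuation_algebraMap 1 hne,
    rootMultiplicity_one_X_pow_sub_one hk, Nat.cast_one]

theorem rootMultiplicity_one_eq_sum_of_eq_prod_one_sub_X_pow {p : K[X]} (hp : p ≠ 0)
    (s : Finset ℕ) (hs : ∀ k ∈ s, (k : K) ≠ 0) (b : ℕ → ℤ)
    (h : algebraMap K[X] (RatFunc K) p = ∏ k ∈ s, (1 - RatFunc.X ^ k) ^ b k) :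
    (p.rootMultiplicity 1 : ℤ) = ∑ k ∈ s, b k := by
  have hval : exp (-(p.rootMultiplicity 1 : ℤ)) = exp (-∑ k ∈ s, b k) := calc
    exp (-(p.rootMultiplicity 1 : ℤ))
      = ∏ k ∈ s, (placeAt (1 : K)).valuation (RatFunc K) (1 - RatFunc.X ^ k) ^ b k := by
        rw [← placeAt_valuation_algebraMap 1 hp, h, map_prod]
        simp only [map_zpow₀]
    _ = ∏ k ∈ s, exp (-b k) := Finset.prod_congr rfl fun k hk ↦ by
        rw [placeAt_one_valuation_one_sub_X_pow (hs k hk), ← exp_zsmul, smul_neg, zsmul_one,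
          Int.cast_id]
    _ = exp (-∑ k ∈ s, b k) := by
        rw [← Finset.sum_neg_distrib, withZero_exp_sum]
  exact neg_injective (exp_injective hval)

end PlaceAt

section Semisimple

theorem finrank_eigenspace_eq_rootMultiplicity_charpoly {V : Type*} [AddCommGroup V] [Module K V]
    [FiniteDimensional K V] {f : Module.End K V} (hf : f.IsSemisimple) (μ : K) :
    Module.finrank K (f.eigenspace μ) = f.charpoly.rootMultiplicity μ := by
  rw [← hf.isFinitelySemisimple.maxGenEigenspace_eq_eigenspace,
    LinearMap.finrank_maxGenEigenspace_eq]

theorem isSemisimple_of_pow_eq_one {V : Type*} [AddCommGroup V] [Module K V]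
    {f : Module.End K V} {r : ℕ} (hr : (r : K) ≠ 0) (hf : f ^ r = 1) : f.IsSemisimple :=
  Module.End.isSemisimple_of_squarefree_aeval_eq_zero (p := X ^ r - 1)
    (X_pow_sub_one_separable_iff.2 hr).squarefree
    (by rw [map_sub, map_pow, aeval_X, map_one, hf, sub_self])

variable {ι : Type*} [Fintype ι] [DecidableEq ι]

theorem isSemisimple_toLin'_of_pow_eq_one {A : Matrix ι ι K} {r : ℕ} (hr : (r : K) ≠ 0)
    (hA : A ^ r = 1) : Module.End.IsSemisimple A.toLin' :=
  isSemisimple_of_pow_eq_one hr <| by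
    rw [← Matrix.toLin'_pow, hA, Matrix.toLin'_one, Module.End.one_eq_id]

theorem charpolyRev_ne_zero {R : Type*} [CommRing R] [Nontrivial R] (A : Matrix ι ι R) :
    A.charpolyRev ≠ 0 := by
  rw [← A.reverse_charpoly, Ne, reverse_eq_zero]
  exact A.charpoly_monic.ne_zero

theorem ker_mulVecLin_sub_one {R : Type*} [CommRing R] (A : Matrix ι ι R) :
    LinearMap.ker (A - 1).mulVecLin = Module.End.eigenspace A.toLin' 1 := by
  rw [Module.End.eigenspace_def, one_smul, Module.End.one_eq_id, ← Matrix.toLin'_one, ← map_sub,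
    Matrix.toLin'_apply']

theorem finrank_ker_mulVecLin_sub_one {A : Matrix ι ι K} (hA : Module.End.IsSemisimple A.toLin') :
    Module.finrank K (LinearMap.ker (A - 1).mulVecLin) = A.charpolyRev.rootMultiplicity 1 := by
  rw [ker_mulVecLin_sub_one, finrank_eigenspace_eq_rootMultiplicity_charpoly hA,
    Matrix.charpoly_toLin', ← rootMultiplicity_inv_reverse _ one_ne_zero, inv_one,
    Matrix.reverse_charpoly]

end Semisimple

theorem fake_monster.stmt14_general {ι : Type*} [Fintype ι] [DecidableEq ι]
    (A : Matrix ι ι K) (hA : Module.End.IsSemisimple A.toLin')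
    (b : ℕ →₀ ℤ) (hb : ∀ k ∈ b.support, (k : K) ≠ 0)
    (hshape : algebraMap K[X] (RatFunc K) A.charpolyRev =
      ∏ k ∈ b.support, ((1 : RatFunc K) - RatFunc.X ^ k) ^ b k) :
    (Module.finrank K (LinearMap.ker (Matrix.mulVecLin (A - 1))) : ℤ) =
      ∑ k ∈ b.support, b k := by
  rw [finrank_ker_mulVecLin_sub_one hA]
  exact rootMultiplicity_one_eq_sum_of_eq_prod_one_sub_X_pow (charpolyRev_ne_zero A) _ hb b hshape

end Field

/-- Let `A` be a square matrix over `ℚ` of finite multiplicative order,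
with cycle shape `b` (i.e. the image in `ℚ(X)` of `det(1 - X·A)` equals
`∏_{k ≥ 1} (1 - X^k)^{b k}` for a finitely supported `b : ℕ → ℤ` with `b 0 = 0`).
Then the dimension over `ℚ` of the fixed subspace `{v : A·v = v}` (the kernel of the
linear map induced by `A - 1` on `ι → ℚ`) equals `∑_{k ≥ 1} b(k)`. -/
theorem fake_monster.stmt14 {ι : Type*} [Fintype ι] [DecidableEq ι]
    (A : Matrix ι ι ℚ) (hfin : ∃ r : ℕ, 0 < r ∧ A ^ r = 1)
    (b : ℕ →₀ ℤ) (hb0 : b 0 = 0)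
    (hshape : algebraMap (Polynomial ℚ) (RatFunc ℚ) A.charpolyRev =
      ∏ k ∈ b.support, ((1 : RatFunc ℚ) - RatFunc.X ^ k) ^ (b k)) :
    (Module.finrank ℚ (LinearMap.ker (Matrix.mulVecLin (A - 1))) : ℤ) =
      ∑ k ∈ b.support, b k := by
  obtain ⟨r, hr, hAr⟩ := hfin
  exact fake_monster.stmt14_general A
    (isSemisimple_toLin'_of_pow_eq_one (Nat.cast_ne_zero.2 hr.ne') hAr) b
    (fun k hk ↦ Nat.cast_ne_zero.2 fun h ↦ Finsupp.mem_support_iff.1 hk (h ▸ hb0)) hshape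
end

section
/- Let ι be a finite type, let n be a positive integer, and let A : Matrix ι ι ℚ satisfy A^n = 1. If d and e are positive integers with gcd(d,n) = gcd(e,n), then A^d and A^e have the same characteristic polynomial, and their fixed subspaces coincide: {v : A^d·v = v} = {v : A^e·v = v}. -/
/-!
Let `g = gcd(d, n)`. A fixed vector of `A ^ d` is a point of period dividing `d` under `A`; every
vector has period dividing `n`, so the fixed vectors of `A ^ d` are those of `A ^ g`.

For the characteristic polynomials, write `d ≡ g * k` modulo `n` with `k` coprime to `n`, so that
`A ^ d = B ^ k` for `B = A ^ g`. The eigenvalues of `B` are `n`-th roots of unity. Since the `n`-th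
cyclotomic polynomial is irreducible, some automorphism `σ` of the algebraic closure raises all of
these to the power `k`. Hence `σ` carries the eigenvalues of `B`, with multiplicity, to those of
`B ^ k`, while it fixes the coefficients of the characteristic polynomial of `B`.
-/

open Polynomial

section CharpolyAeval

variable {ι R K : Type*} [Fintype ι] [DecidableEq ι]

lemma det_aeval_X_add_C [CommRing R] (M : Matrix ι ι R) (a : R) :
    (aeval M (X + C a)).det = (-1) ^ Fintype.card ι * M.charpoly.eval (-a) := by
  rw [Matrix.eval_charpoly, ← Matrix.det_neg, map_neg, neg_sub, sub_neg_eq_add]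
  simp [Matrix.algebraMap_eq_diagonal, Pi.algebraMap_def]

lemma det_aeval_eq_prod_roots_charpoly_of_splits [CommRing R] [IsDomain R] {M : Matrix ι ι R}
    {p : R[X]} (hM : M.charpoly.Splits) (hp : p.Splits) :
    (aeval M p).det = (M.charpoly.roots.map p.eval).prod := by
  have hcard : M.charpoly.roots.card = Fintype.card ι := by
    rw [← hM.natDegree_eq_card_roots, M.charpoly_natDegree_eq_dim]
  induction hp using Submonoid.closure_induction with
  | mem p hp =>
    rcases hp with ⟨a, rfl⟩ | ⟨a, rfl⟩
    · simp [hcard, Matrix.algebraMap_eq_diagonal, Pi.algebraMap_def]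
    · rw [det_aeval_X_add_C, hM.eval_eq_prod_roots_of_monic M.charpoly_monic, ← hcard,
        ← Multiset.card_map, ← Multiset.prod_map_neg, Multiset.map_map]
      simp [add_comm]
  | one => simp
  | mul p q _ _ hp hq => simp [hp, hq, Multiset.prod_map_mul]

lemma charpoly_aeval_eq_prod_roots_charpoly [Field K] [IsAlgClosed K] (M : Matrix ι ι K)
    (p : K[X]) :
    (aeval M p).charpoly = (M.charpoly.roots.map fun r ↦ X - C (p.eval r)).prod := by
  refine Polynomial.funext fun t ↦ ?_
  have hdet : (aeval M p).charpoly.eval t = (aeval M (C t - p)).det := by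
    simp [Matrix.eval_charpoly, Matrix.algebraMap_eq_diagonal, Pi.algebraMap_def]
  rw [hdet, det_aeval_eq_prod_roots_charpoly_of_splits (IsAlgClosed.splits _)
    (IsAlgClosed.splits _), eval_multiset_prod, Multiset.map_map]
  simp

end CharpolyAeval

lemma pow_eq_one_of_mem_spectrum {K A : Type*} [Field K] [Ring A] [Algebra K A] {a : A} {n : ℕ}
    (ha : a ^ n = 1) {r : K} (hr : r ∈ spectrum K a) : r ^ n = 1 := by
  have hA : Nontrivial A := not_subsingleton_iff_nontrivial.mp fun _ ↦ by
    simp [spectrum.of_subsingleton] at hr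
  simpa [ha] using spectrum.pow_mem_pow a n hr

lemma exists_algEquiv_eq_pow_of_irreducible_cyclotomic {K L : Type*} [Field K] [Field L]
    [Algebra K L] [Normal K L] {n k : ℕ} [NeZero (n : K)] (hirr : Irreducible (cyclotomic n K))
    {ζ : L} (hζ : IsPrimitiveRoot ζ n) (hk : k.Coprime n) :
    ∃ σ : L ≃ₐ[K] L, ∀ r : L, r ^ n = 1 → σ r = r ^ k := by
  have : NeZero n := .of_neZero_natCast K
  have hconj : IsConjRoot K (ζ ^ k) ζ := by
    rw [IsConjRoot, ← hζ.minpoly_eq_cyclotomic_of_irreducible hirr,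
      ← (hζ.pow_of_coprime k hk).minpoly_eq_cyclotomic_of_irreducible hirr]
  obtain ⟨σ, hσ⟩ := hconj.exists_algEquiv
  refine ⟨σ, fun r hr ↦ ?_⟩
  obtain ⟨i, -, rfl⟩ := hζ.eq_pow_of_pow_eq_one hr
  rw [map_pow, hσ, pow_right_comm]

lemma exists_coprime_gcd_mul_modEq (d n : ℕ) [NeZero n] :
    ∃ k : ℕ, k.Coprime n ∧ d.gcd n * k ≡ d [MOD n] := by
  have hdn : n / d.gcd n ∣ n := Nat.div_dvd_of_dvd (Nat.gcd_dvd_right d n)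
  have hcop : (d / d.gcd n).Coprime (n / d.gcd n) :=
    Nat.coprime_div_gcd_div_gcd (Nat.gcd_pos_of_pos_right d (NeZero.pos n))
  obtain ⟨u, hu⟩ := ZMod.unitsMap_surjective hdn (ZMod.unitOfCoprime _ hcop)
  have hmod : (u : ZMod n).val ≡ d / d.gcd n [MOD n / d.gcd n] := by
    rw [← ZMod.natCast_eq_natCast_iff, ZMod.natCast_val, ← ZMod.unitsMap_val hdn, hu,
      ZMod.coe_unitOfCoprime]
  refine ⟨(u : ZMod n).val, ZMod.val_coe_unit_coprime u, ?_⟩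
  simpa only [Nat.mul_div_cancel' (Nat.gcd_dvd_left d n),
    Nat.mul_div_cancel' (Nat.gcd_dvd_right d n)] using hmod.mul_left' (d.gcd n)

section FiniteOrder

variable {ι R K : Type*} [Fintype ι] [DecidableEq ι]

lemma charpoly_pow_eq_map_charpoly [Field K] [IsAlgClosed K] {M : Matrix ι ι K} {n k : ℕ}
    (hM : M ^ n = 1) {σ : K →+* K} (hσ : ∀ r : K, r ^ n = 1 → σ r = r ^ k) :
    (M ^ k).charpoly = M.charpoly.map σ := by
  have hroots : ∀ r ∈ M.charpoly.roots, r ^ k = σ r := fun r hr ↦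
    have hspec := Matrix.mem_spectrum_of_isRoot_charpoly (isRoot_of_mem_roots hr)
    (hσ r (pow_eq_one_of_mem_spectrum hM hspec)).symm
  calc (M ^ k).charpoly
      = (M.charpoly.roots.map fun r ↦ X - C (r ^ k)).prod := by
        simpa using charpoly_aeval_eq_prod_roots_charpoly M (X ^ k)
    _ = (M.charpoly.roots.map fun r ↦ X - C (σ r)).prod := by
        rw [Multiset.map_congr rfl fun r hr ↦ by rw [hroots r hr]]
    _ = (M.charpoly.roots.map fun r ↦ X - C r).prod.map σ := by
        simp [Polynomial.map_multiset_prod]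
    _ = M.charpoly.map σ := by
        rw [← (IsAlgClosed.splits M.charpoly).eq_prod_roots_of_monic M.charpoly_monic]

lemma charpoly_pow_eq_of_coprime [Field K] {n k : ℕ} [NeZero (n : K)]
    (hirr : Irreducible (cyclotomic n K)) {A : Matrix ι ι K} (hA : A ^ n = 1) (hk : k.Coprime n) :
    (A ^ k).charpoly = A.charpoly := by
  let f : K →+* AlgebraicClosure K := algebraMap K (AlgebraicClosure K)
  have hfA : f.mapMatrix A ^ n = 1 := by rw [← map_pow, hA, map_one]
  obtain ⟨ζ, hζ⟩ := HasEnoughRootsOfUnity.exists_primitiveRoot (AlgebraicClosure K) n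
  obtain ⟨σ, hσ⟩ := exists_algEquiv_eq_pow_of_irreducible_cyclotomic hirr hζ hk
  have hσf : (σ : AlgebraicClosure K →+* AlgebraicClosure K).comp f = f :=
    RingHom.ext σ.commutes
  refine map_injective f f.injective ?_
  calc (A ^ k).charpoly.map f
      = (f.mapMatrix A ^ k).charpoly := by
        rw [← Matrix.charpoly_map, ← RingHom.mapMatrix_apply, map_pow]
    _ = (A.charpoly.map f).map (σ : AlgebraicClosure K →+* AlgebraicClosure K) := by
        rw [charpoly_pow_eq_map_charpoly (σ := σ) hfA hσ, RingHom.mapMatrix_apply,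
          Matrix.charpoly_map]
    _ = A.charpoly.map f := by rw [Polynomial.map_map, hσf]

lemma charpoly_pow_eq_charpoly_pow_gcd [Field K] {n : ℕ} [NeZero (n : K)]
    (hirr : Irreducible (cyclotomic n K)) {A : Matrix ι ι K} (hA : A ^ n = 1) (d : ℕ) :
    (A ^ d).charpoly = (A ^ d.gcd n).charpoly := by
  have : NeZero n := .of_neZero_natCast K
  obtain ⟨k, hk, hmod⟩ := exists_coprime_gcd_mul_modEq d n
  have hpow : A ^ d = (A ^ d.gcd n) ^ k := by
    rw [← pow_mul, pow_eq_pow_mod d hA, pow_eq_pow_mod (d.gcd n * k) hA, hmod]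
  have hone : (A ^ d.gcd n) ^ n = 1 := by rw [pow_right_comm, hA, one_pow]
  rw [hpow, charpoly_pow_eq_of_coprime hirr hone hk]

lemma mem_ker_mulVecLin_pow_sub_one_iff [CommRing R] {A : Matrix ι ι R} {d : ℕ} {v : ι → R} :
    v ∈ LinearMap.ker (A ^ d - 1).mulVecLin ↔ Function.IsPeriodicPt A.mulVec d v := by
  have hiter : A.mulVec^[d] v = (A ^ d).mulVec v := by
    induction d with
    | zero => simp
    | succ d ih => rw [Function.iterate_succ_apply', ih, Matrix.mulVec_mulVec, pow_succ']
  rw [LinearMap.mem_ker, Matrix.mulVecLin_apply, Matrix.sub_mulVec, Matrix.one_mulVec, sub_eq_zero,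
    Function.IsPeriodicPt, Function.IsFixedPt, hiter]

lemma ker_mulVecLin_pow_sub_one_eq_gcd [CommRing R] {A : Matrix ι ι R} {n : ℕ} (hA : A ^ n = 1)
    (d : ℕ) :
    LinearMap.ker (A ^ d - 1).mulVecLin = LinearMap.ker (A ^ d.gcd n - 1).mulVecLin := by
  ext v
  have hn : Function.IsPeriodicPt A.mulVec n v := by
    simp [← mem_ker_mulVecLin_pow_sub_one_iff, hA]
  simp only [mem_ker_mulVecLin_pow_sub_one_iff]
  exact ⟨fun hd ↦ hd.gcd hn, fun hg ↦ hg.trans_dvd (Nat.gcd_dvd_left d n)⟩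

end FiniteOrder

theorem fake_monster.stmt15_general {ι K : Type*} [Fintype ι] [DecidableEq ι] [Field K]
    {n : ℕ} [NeZero (n : K)] (hirr : Irreducible (cyclotomic n K)) {A : Matrix ι ι K}
    (hA : A ^ n = 1) {d e : ℕ} (h : Nat.gcd d n = Nat.gcd e n) :
    (A ^ d).charpoly = (A ^ e).charpoly ∧
      LinearMap.ker (Matrix.mulVecLin (A ^ d - 1)) =
        LinearMap.ker (Matrix.mulVecLin (A ^ e - 1)) := by
  constructor
  · rw [charpoly_pow_eq_charpoly_pow_gcd hirr hA d, h, ← charpoly_pow_eq_charpoly_pow_gcd hirr hA]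
  · rw [ker_mulVecLin_pow_sub_one_eq_gcd hA d, h, ← ker_mulVecLin_pow_sub_one_eq_gcd hA]

/-- Let `A` be a square matrix over `ℚ` with `A^n = 1` for a positive
integer `n`.  If `d` and `e` are positive integers with `gcd(d,n) = gcd(e,n)`, then `A^d`
and `A^e` have the same characteristic polynomial and the same fixed subspace
`{v : A^d·v = v} = {v : A^e·v = v}` (kernels of the maps induced by `A^d - 1` and
`A^e - 1` on `ι → ℚ`). -/
theorem fake_monster.stmt15 {ι : Type*} [Fintype ι] [DecidableEq ι]
    (n : ℕ) (hn : 0 < n) (A : Matrix ι ι ℚ) (hA : A ^ n = 1)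
    (d e : ℕ) (hd : 0 < d) (he : 0 < e) (h : Nat.gcd d n = Nat.gcd e n) :
    (A ^ d).charpoly = (A ^ e).charpoly ∧
      LinearMap.ker (Matrix.mulVecLin (A ^ d - 1)) =
        LinearMap.ker (Matrix.mulVecLin (A ^ e - 1)) := by
  have : NeZero (n : ℚ) := ⟨Nat.cast_ne_zero.mpr hn.ne'⟩
  exact fake_monster.stmt15_general (cyclotomic.irreducible_rat hn) hA h
end
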